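/- arXiv:0802.3320 — 2 statements merged into one kernel-verified Lean document; each statement's English description precedes it below -/
import Mathlib

section
/- Let f be a smooth real-valued function of (r, z) ∈ (0, π/2) × ℝ. With L f = ∂²f/∂r² + 2·cot(2r)·∂f/∂r + tan²(r)·∂²f/∂z², Γ(f, g) = (∂_r f)(∂_r g) + tan²(r)·(∂_z f)(∂_z g), and Γ₂(f) := (1/2)(L(Γ(f, f)) - 2Γ(f, L f)), one has the sum-of-squares identity Γ₂(f) = (∂²f/∂r²)² + (tan²r · ∂²f/∂z² - (2/sin 2r) · ∂f/∂r)² + 2·((1/cos²r) · ∂f/∂z + tan r · ∂²f/∂r∂z)². In particular Γ₂(f) ≥ 0 at every point of (0, π/2) × ℝ. -/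
open Real

/-- Partial derivative in `r` of a function of `(r, z)`. -/
noncomputable def dR (f : ℝ → ℝ → ℝ) (r z : ℝ) : ℝ := deriv (fun r' => f r' z) r

/-- Partial derivative in `z` of a function of `(r, z)`. -/
noncomputable def dZ (f : ℝ → ℝ → ℝ) (r z : ℝ) : ℝ := deriv (fun z' => f r z') z

/-- The sublaplacian `L f = ∂²f/∂r² + 2 cot(2r) ∂f/∂r + tan²(r) ∂²f/∂z²` of `SU(2)` in
cylindric coordinates, acting on functions independent of `θ`. -/
noncomputable def subLap (f : ℝ → ℝ → ℝ) (r z : ℝ) : ℝ :=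
  dR (dR f) r z + 2 * (Real.cos (2 * r) / Real.sin (2 * r)) * dR f r z +
    Real.tan r ^ 2 * dZ (dZ f) r z

/-- The carré du champ `Γ(f,g) = (∂_r f)(∂_r g) + tan²(r)(∂_z f)(∂_z g)`. -/
noncomputable def carre (f g : ℝ → ℝ → ℝ) (r z : ℝ) : ℝ :=
  dR f r z * dR g r z + Real.tan r ^ 2 * dZ f r z * dZ g r z

/-- The iterated carré du champ `Γ₂(f) = (1/2)(L Γ(f,f) - 2 Γ(f, L f))`. -/
noncomputable def carre2 (f : ℝ → ℝ → ℝ) (r z : ℝ) : ℝ :=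
  (1 / 2) * (subLap (fun r' z' => carre f f r' z') r z -
    2 * carre f (fun r' z' => subLap f r' z') r z)

/-!
For an operator `∂²/∂r² + a(r) ∂/∂r + b(r) ∂²/∂z²` all third order derivatives cancel in `Γ₂(f)`,
because partial derivatives commute. What is left is the Bochner formula
`f_rr² + 2 b f_rz² + b² f_zz² - a' f_r² - b' f_r f_zz + 2 b' f_z f_rz + ½ (b'' + a b') f_z²`.
Write `b = σ²` and `s = σ' / σ`. The squares complete exactly when `a' = -s²` and `s' = -a s`, and
`a = 2 cot 2r`, `s = 2 / sin 2r`, `σ = tan r` solve this system.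
-/

open Filter Function Topology

section PartialDerivatives

variable {f g : ℝ → ℝ → ℝ} {r z : ℝ} {p : ℝ × ℝ} {m n : WithTop ℕ∞}

lemma hasDerivAt_fst_fderiv (hf : DifferentiableAt ℝ (uncurry f) (r, z)) :
    HasDerivAt (fun x => f x z) (fderiv ℝ (uncurry f) (r, z) (1, 0)) r :=
  hf.hasFDerivAt.comp_hasDerivAt (f := fun x => (x, z)) r
    ((hasDerivAt_id r).prodMk (hasDerivAt_const r z))

lemma hasDerivAt_snd_fderiv (hf : DifferentiableAt ℝ (uncurry f) (r, z)) :
    HasDerivAt (fun y => f r y) (fderiv ℝ (uncurry f) (r, z) (0, 1)) z :=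
  hf.hasFDerivAt.comp_hasDerivAt (f := fun y => (r, y)) z
    ((hasDerivAt_const z r).prodMk (hasDerivAt_id z))

lemma dR_eq_fderiv (hf : DifferentiableAt ℝ (uncurry f) (r, z)) :
    dR f r z = fderiv ℝ (uncurry f) (r, z) (1, 0) :=
  (hasDerivAt_fst_fderiv hf).deriv

lemma dZ_eq_fderiv (hf : DifferentiableAt ℝ (uncurry f) (r, z)) :
    dZ f r z = fderiv ℝ (uncurry f) (r, z) (0, 1) :=
  (hasDerivAt_snd_fderiv hf).deriv

lemma hasDerivAt_dR (hf : DifferentiableAt ℝ (uncurry f) (r, z)) :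
    HasDerivAt (fun x => f x z) (dR f r z) r :=
  (hasDerivAt_fst_fderiv hf).differentiableAt.hasDerivAt

lemma hasDerivAt_dZ (hf : DifferentiableAt ℝ (uncurry f) (r, z)) :
    HasDerivAt (fun y => f r y) (dZ f r z) z :=
  (hasDerivAt_snd_fderiv hf).differentiableAt.hasDerivAt

lemma dR_congr (h : uncurry f =ᶠ[𝓝 (r, z)] uncurry g) : dR f r z = dR g r z :=
  EventuallyEq.deriv_eq (h.comp_tendsto (Continuous.prodMk_left z).continuousAt)

lemma dZ_congr (h : uncurry f =ᶠ[𝓝 (r, z)] uncurry g) : dZ f r z = dZ g r z :=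
  EventuallyEq.deriv_eq (h.comp_tendsto (Continuous.prodMk_right r).continuousAt)

lemma eventually_differentiableAt_of_contDiffAt (hf : ContDiffAt ℝ 1 (uncurry f) p) :
    ∀ᶠ q in 𝓝 p, DifferentiableAt ℝ (uncurry f) q :=
  (hf.eventually (by simp)).mono fun _ hq => hq.differentiableAt one_ne_zero

lemma uncurry_dR_eventuallyEq_fderiv (hf : ContDiffAt ℝ 1 (uncurry f) p) :
    uncurry (dR f) =ᶠ[𝓝 p] fun q => fderiv ℝ (uncurry f) q (1, 0) :=
  (eventually_differentiableAt_of_contDiffAt hf).mono fun _ hq => dR_eq_fderiv hq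

lemma uncurry_dZ_eventuallyEq_fderiv (hf : ContDiffAt ℝ 1 (uncurry f) p) :
    uncurry (dZ f) =ᶠ[𝓝 p] fun q => fderiv ℝ (uncurry f) q (0, 1) :=
  (eventually_differentiableAt_of_contDiffAt hf).mono fun _ hq => dZ_eq_fderiv hq

lemma contDiffAt_dR (hf : ContDiffAt ℝ n (uncurry f) p) (hmn : m + 1 ≤ n) :
    ContDiffAt ℝ m (uncurry (dR f)) p :=
  ((hf.fderiv_right hmn).clm_apply contDiffAt_const).congr_of_eventuallyEq
    (uncurry_dR_eventuallyEq_fderiv (hf.of_le (le_add_self.trans hmn)))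

lemma contDiffAt_dZ (hf : ContDiffAt ℝ n (uncurry f) p) (hmn : m + 1 ≤ n) :
    ContDiffAt ℝ m (uncurry (dZ f)) p :=
  ((hf.fderiv_right hmn).clm_apply contDiffAt_const).congr_of_eventuallyEq
    (uncurry_dZ_eventuallyEq_fderiv (hf.of_le (le_add_self.trans hmn)))

lemma differentiableAt_dR (hf : ContDiffAt ℝ 2 (uncurry f) p) :
    DifferentiableAt ℝ (uncurry (dR f)) p :=
  (contDiffAt_dR hf one_add_one_eq_two.le).differentiableAt one_ne_zero

lemma differentiableAt_dZ (hf : ContDiffAt ℝ 2 (uncurry f) p) :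
    DifferentiableAt ℝ (uncurry (dZ f)) p :=
  (contDiffAt_dZ hf one_add_one_eq_two.le).differentiableAt one_ne_zero

lemma dR_dZ_comm (hf : ContDiffAt ℝ 2 (uncurry f) (r, z)) :
    dR (dZ f) r z = dZ (dR f) r z := by
  have hf1 : ContDiffAt ℝ 1 (uncurry f) (r, z) := hf.of_le one_le_two
  have hdf : DifferentiableAt ℝ (fderiv ℝ (uncurry f)) (r, z) :=
    (hf.fderiv_right one_add_one_eq_two.le).differentiableAt one_ne_zero
  have hsymm : IsSymmSndFDerivAt ℝ (uncurry f) (r, z) := hf.isSymmSndFDerivAt (by simp)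
  rw [dR_eq_fderiv (differentiableAt_dZ hf), dZ_eq_fderiv (differentiableAt_dR hf),
    (uncurry_dZ_eventuallyEq_fderiv hf1).fderiv_eq, (uncurry_dR_eventuallyEq_fderiv hf1).fderiv_eq,
    fderiv_clm_apply hdf (differentiableAt_const _),
    fderiv_clm_apply hdf (differentiableAt_const _)]
  simpa using hsymm.eq (1, 0) (0, 1)

lemma uncurry_dR_dZ_eventuallyEq (hf : ContDiffAt ℝ 2 (uncurry f) p) :
    uncurry (dR (dZ f)) =ᶠ[𝓝 p] uncurry (dZ (dR f)) :=
  (hf.eventually (by simp)).mono fun _ hq => dR_dZ_comm hq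

lemma dR_dR_dZ_eq_dZ_dR_dR (hf : ContDiffAt ℝ 3 (uncurry f) (r, z)) :
    dR (dR (dZ f)) r z = dZ (dR (dR f)) r z :=
  (dR_congr (uncurry_dR_dZ_eventuallyEq (hf.of_le (by norm_num)))).trans
    (dR_dZ_comm (contDiffAt_dR hf (by norm_num)))

lemma dR_dZ_dZ_eq_dZ_dZ_dR (hf : ContDiffAt ℝ 3 (uncurry f) (r, z)) :
    dR (dZ (dZ f)) r z = dZ (dZ (dR f)) r z :=
  (dR_dZ_comm (contDiffAt_dZ hf (by norm_num))).trans
    (dZ_congr (uncurry_dR_dZ_eventuallyEq (hf.of_le (by norm_num))))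

end PartialDerivatives

/-- The operator `∂²/∂r² + a(r) ∂/∂r + b(r) ∂²/∂z²`, of which `subLap` is the case
`a = 2 cot 2r`, `b = tan² r`. -/
noncomputable def radialLap (a b : ℝ → ℝ) (f : ℝ → ℝ → ℝ) (r z : ℝ) : ℝ :=
  dR (dR f) r z + a r * dR f r z + b r * dZ (dZ f) r z

/-- The carré du champ of `radialLap a b`; it does not depend on the drift `a`. -/
noncomputable def radialCarre (b : ℝ → ℝ) (f g : ℝ → ℝ → ℝ) (r z : ℝ) : ℝ :=
  dR f r z * dR g r z + b r * dZ f r z * dZ g r z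

/-- The iterated carré du champ of `radialLap a b`, on the diagonal. -/
noncomputable def radialCarre2 (a b : ℝ → ℝ) (f : ℝ → ℝ → ℝ) (r z : ℝ) : ℝ :=
  (1 / 2) * (radialLap a b (radialCarre b f f) r z - 2 * radialCarre b f (radialLap a b f) r z)

lemma carre2_eq_radialCarre2 (f : ℝ → ℝ → ℝ) :
    carre2 f =
      radialCarre2 (fun x => 2 * (cos (2 * x) / sin (2 * x))) (fun x => tan x ^ 2) f :=
  rfl

section Bochner

variable {f : ℝ → ℝ → ℝ} {a b b' : ℝ → ℝ} {a₁ b₁ b₂ r z : ℝ}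

lemma dR_radialCarre_self (hf : ContDiffAt ℝ 2 (uncurry f) (r, z)) (hb : HasDerivAt b b₁ r) :
    dR (radialCarre b f f) r z =
      2 * dR f r z * dR (dR f) r z + b₁ * dZ f r z ^ 2 +
        2 * b r * dZ f r z * dR (dZ f) r z := by
  have hfr := hasDerivAt_dR (differentiableAt_dR hf)
  have hfz := hasDerivAt_dR (differentiableAt_dZ hf)
  refine ((hfr.mul hfr).add ((hb.mul hfz).mul hfz)).deriv.trans ?_
  simp only [Pi.mul_apply]
  ring

lemma dZ_radialCarre_self (hf : ContDiffAt ℝ 2 (uncurry f) (r, z)) :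
    dZ (radialCarre b f f) r z =
      2 * dR f r z * dZ (dR f) r z + 2 * b r * dZ f r z * dZ (dZ f) r z := by
  have hfr := hasDerivAt_dZ (differentiableAt_dR hf)
  have hfz := hasDerivAt_dZ (differentiableAt_dZ hf)
  refine ((hfr.mul hfr).add ((hfz.const_mul (b r)).mul hfz)).deriv.trans ?_
  ring

lemma dR_dR_radialCarre_self (hf : ContDiffAt ℝ 3 (uncurry f) (r, z))
    (hb : ∀ᶠ x in 𝓝 r, HasDerivAt b (b' x) x) (hb' : HasDerivAt b' b₂ r) :
    dR (dR (radialCarre b f f)) r z =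
      2 * (dR (dR f) r z ^ 2 + dR f r z * dR (dR (dR f)) r z) + b₂ * dZ f r z ^ 2 +
        4 * b' r * dZ f r z * dR (dZ f) r z +
        2 * b r * (dR (dZ f) r z ^ 2 + dZ f r z * dR (dR (dZ f)) r z) := by
  have hf2 : ContDiffAt ℝ 2 (uncurry f) (r, z) := hf.of_le (by norm_num)
  have hfirst : uncurry (dR (radialCarre b f f)) =ᶠ[𝓝 (r, z)] uncurry fun x y =>
      2 * dR f x y * dR (dR f) x y + b' x * dZ f x y ^ 2 + 2 * b x * dZ f x y * dR (dZ f) x y := by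
    filter_upwards [hf2.eventually (by simp), hb.prod_inl_nhds z] with q hq hbq
    exact dR_radialCarre_self hq hbq
  have hfr := hasDerivAt_dR (differentiableAt_dR hf2)
  have hfz := hasDerivAt_dR (differentiableAt_dZ hf2)
  have hfrr := hasDerivAt_dR (differentiableAt_dR (contDiffAt_dR hf (by norm_num)))
  have hfrz := hasDerivAt_dR (differentiableAt_dR (contDiffAt_dZ hf (by norm_num)))
  rw [dR_congr hfirst]
  refine ((((hfr.const_mul 2).mul hfrr).add (hb'.mul (hfz.pow 2))).add
    (((hb.self_of_nhds.const_mul 2).mul hfz).mul hfrz)).deriv.trans ?_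
  simp only [Pi.mul_apply, Pi.pow_apply]
  push_cast
  ring

lemma dZ_dZ_radialCarre_self (hf : ContDiffAt ℝ 3 (uncurry f) (r, z)) :
    dZ (dZ (radialCarre b f f)) r z =
      2 * (dZ (dR f) r z ^ 2 + dR f r z * dZ (dZ (dR f)) r z) +
        2 * b r * (dZ (dZ f) r z ^ 2 + dZ f r z * dZ (dZ (dZ f)) r z) := by
  have hf2 : ContDiffAt ℝ 2 (uncurry f) (r, z) := hf.of_le (by norm_num)
  have hfirst : uncurry (dZ (radialCarre b f f)) =ᶠ[𝓝 (r, z)] uncurry fun x y =>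
      2 * dR f x y * dZ (dR f) x y + 2 * b x * dZ f x y * dZ (dZ f) x y :=
    (hf2.eventually (by simp)).mono fun _ hq => dZ_radialCarre_self hq
  have hfr := hasDerivAt_dZ (differentiableAt_dR hf2)
  have hfz := hasDerivAt_dZ (differentiableAt_dZ hf2)
  have hfrz := hasDerivAt_dZ (differentiableAt_dZ (contDiffAt_dR hf (by norm_num)))
  have hfzz := hasDerivAt_dZ (differentiableAt_dZ (contDiffAt_dZ hf (by norm_num)))
  rw [dZ_congr hfirst]
  refine (((hfr.const_mul 2).mul hfrz).add
    ((hfz.const_mul (2 * b r)).mul hfzz)).deriv.trans ?_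
  ring

lemma dR_radialLap (hf : ContDiffAt ℝ 3 (uncurry f) (r, z)) (ha : HasDerivAt a a₁ r)
    (hb : HasDerivAt b b₁ r) :
    dR (radialLap a b f) r z =
      dR (dR (dR f)) r z + (a₁ * dR f r z + a r * dR (dR f) r z) +
        (b₁ * dZ (dZ f) r z + b r * dR (dZ (dZ f)) r z) := by
  have hfr := hasDerivAt_dR (differentiableAt_dR (hf.of_le (by norm_num)))
  have hfrr := hasDerivAt_dR (differentiableAt_dR (contDiffAt_dR hf (by norm_num)))
  have hfzz := hasDerivAt_dR (differentiableAt_dZ (contDiffAt_dZ hf (by norm_num)))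
  exact ((hfrr.add (ha.mul hfr)).add (hb.mul hfzz)).deriv

lemma dZ_radialLap (hf : ContDiffAt ℝ 3 (uncurry f) (r, z)) :
    dZ (radialLap a b f) r z =
      dZ (dR (dR f)) r z + a r * dZ (dR f) r z + b r * dZ (dZ (dZ f)) r z := by
  have hfr := hasDerivAt_dZ (differentiableAt_dR (hf.of_le (by norm_num)))
  have hfrr := hasDerivAt_dZ (differentiableAt_dR (contDiffAt_dR hf (by norm_num)))
  have hfzz := hasDerivAt_dZ (differentiableAt_dZ (contDiffAt_dZ hf (by norm_num)))
  exact ((hfrr.add (hfr.const_mul (a r))).add (hfzz.const_mul (b r))).deriv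

theorem radialCarre2_eq_bochner (hf : ContDiffAt ℝ 3 (uncurry f) (r, z)) (ha : HasDerivAt a a₁ r)
    (hb : ∀ᶠ x in 𝓝 r, HasDerivAt b (b' x) x) (hb' : HasDerivAt b' b₂ r) :
    radialCarre2 a b f r z =
      dR (dR f) r z ^ 2 + 2 * b r * dR (dZ f) r z ^ 2 + b r ^ 2 * dZ (dZ f) r z ^ 2 -
        a₁ * dR f r z ^ 2 - b' r * dR f r z * dZ (dZ f) r z +
        2 * b' r * dZ f r z * dR (dZ f) r z + 1 / 2 * (b₂ + a r * b' r) * dZ f r z ^ 2 := by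
  have hf2 : ContDiffAt ℝ 2 (uncurry f) (r, z) := hf.of_le (by norm_num)
  rw [radialCarre2, radialLap, radialCarre, dR_dR_radialCarre_self hf hb hb',
    dR_radialCarre_self hf2 hb.self_of_nhds, dZ_dZ_radialCarre_self hf,
    dR_radialLap hf ha hb.self_of_nhds, dZ_radialLap hf, dR_dR_dZ_eq_dZ_dR_dR hf,
    dR_dZ_dZ_eq_dZ_dZ_dR hf, dR_dZ_comm hf2]
  ring

end Bochner

theorem radialCarre2_sq_eq_sum_sq {f : ℝ → ℝ → ℝ} {a s σ : ℝ → ℝ} {r z : ℝ}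
    (hf : ContDiffAt ℝ 3 (uncurry f) (r, z))
    (ha : HasDerivAt a (-s r ^ 2) r) (hs : HasDerivAt s (-(a r * s r)) r)
    (hσ : ∀ᶠ x in 𝓝 r, HasDerivAt σ (s x * σ x) x) :
    radialCarre2 a (fun x => σ x ^ 2) f r z =
      dR (dR f) r z ^ 2 + (σ r ^ 2 * dZ (dZ f) r z - s r * dR f r z) ^ 2 +
        2 * (s r * σ r * dZ f r z + σ r * dR (dZ f) r z) ^ 2 := by
  have hsq : ∀ᶠ x in 𝓝 r, HasDerivAt (fun y => σ y ^ 2) (2 * s x * σ x ^ 2) x :=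
    hσ.mono fun x hx => (hx.pow 2).congr_deriv (by push_cast; ring)
  have hsq' : HasDerivAt (fun x => 2 * s x * σ x ^ 2)
      ((4 * s r ^ 2 - 2 * a r * s r) * σ r ^ 2) r :=
    ((hs.const_mul 2).mul hsq.self_of_nhds).congr_deriv (by ring)
  rw [radialCarre2_eq_bochner hf ha hsq hsq']
  ring

section Trigonometry

variable {r : ℝ}

lemma hasDerivAt_two_mul_cos_div_sin_two_mul (hr : sin (2 * r) ≠ 0) :
    HasDerivAt (fun x => 2 * (cos (2 * x) / sin (2 * x))) (-(2 / sin (2 * r)) ^ 2) r := by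
  have htwo : HasDerivAt (fun x : ℝ => 2 * x) 2 r := hasDerivAt_const_mul 2
  refine ((htwo.cos.div htwo.sin hr).const_mul 2).congr_deriv ?_
  field_simp
  linarith [sin_sq_add_cos_sq (2 * r)]

lemma hasDerivAt_two_div_sin_two_mul (hr : sin (2 * r) ≠ 0) :
    HasDerivAt (fun x => 2 / sin (2 * x))
      (-(2 * (cos (2 * r) / sin (2 * r)) * (2 / sin (2 * r)))) r := by
  have htwo : HasDerivAt (fun x : ℝ => 2 * x) 2 r := hasDerivAt_const_mul 2
  refine ((hasDerivAt_const r 2).div htwo.sin hr).congr_deriv ?_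
  field_simp
  ring

lemma two_div_sin_two_mul_mul_tan (hr : sin (2 * r) ≠ 0) :
    2 / sin (2 * r) * tan r = 1 / cos r ^ 2 := by
  rw [sin_two_mul] at hr ⊢
  have hsin : sin r ≠ 0 := right_ne_zero_of_mul (left_ne_zero_of_mul hr)
  have hcos : cos r ≠ 0 := right_ne_zero_of_mul hr
  rw [tan_eq_sin_div_cos]
  field_simp

lemma hasDerivAt_tan_of_sin_two_mul_ne_zero (hr : sin (2 * r) ≠ 0) :
    HasDerivAt tan (2 / sin (2 * r) * tan r) r := by
  rw [two_div_sin_two_mul_mul_tan hr]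
  rw [sin_two_mul] at hr
  exact hasDerivAt_tan (right_ne_zero_of_mul hr)

end Trigonometry

theorem stmt_16_general {f : ℝ → ℝ → ℝ} {r z : ℝ} (hf : ContDiffAt ℝ 3 (uncurry f) (r, z))
    (hr : sin (2 * r) ≠ 0) :
    carre2 f r z =
      dR (dR f) r z ^ 2 +
        (tan r ^ 2 * dZ (dZ f) r z - 2 / sin (2 * r) * dR f r z) ^ 2 +
        2 * (1 / cos r ^ 2 * dZ f r z + tan r * dR (dZ f) r z) ^ 2 ∧
    0 ≤ carre2 f r z := by
  have htan : ∀ᶠ x in 𝓝 r, HasDerivAt tan (2 / sin (2 * x) * tan x) x :=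
    ((by fun_prop : Continuous fun x => sin (2 * x)).continuousAt.eventually_ne hr).mono
      fun _ => hasDerivAt_tan_of_sin_two_mul_ne_zero
  have hsum := radialCarre2_sq_eq_sum_sq hf (hasDerivAt_two_mul_cos_div_sin_two_mul hr)
    (hasDerivAt_two_div_sin_two_mul hr) htan
  rw [two_div_sin_two_mul_mul_tan hr, ← carre2_eq_radialCarre2] at hsum
  exact ⟨hsum, hsum ▸ by positivity⟩

/-- Sum-of-squares identity for `Γ₂` on `SU(2)`: for smooth `f` of `(r,z) ∈ (0,π/2) × ℝ`,
`Γ₂(f) = (∂²f/∂r²)² + (tan²r ∂²f/∂z² - (2/sin 2r) ∂f/∂r)²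
  + 2((1/cos²r) ∂f/∂z + tan r ∂²f/∂r∂z)²`, so in particular `Γ₂(f) ≥ 0`. -/
theorem stmt_16 (f : ℝ → ℝ → ℝ)
    (hf : ContDiffOn ℝ (⊤ : ℕ∞) (fun p : ℝ × ℝ => f p.1 p.2)
      (Set.Ioo 0 (Real.pi / 2) ×ˢ (Set.univ : Set ℝ)))
    (r : ℝ) (hr : r ∈ Set.Ioo 0 (Real.pi / 2)) (z : ℝ) :
    carre2 f r z =
      (dR (dR f) r z) ^ 2 +
        (Real.tan r ^ 2 * dZ (dZ f) r z - (2 / Real.sin (2 * r)) * dR f r z) ^ 2 +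
        2 * ((1 / Real.cos r ^ 2) * dZ f r z + Real.tan r * dR (dZ f) r z) ^ 2 ∧
    0 ≤ carre2 f r z := by
  have hf3 : ContDiffAt ℝ 3 (uncurry f) (r, z) :=
    (hf.contDiffAt ((isOpen_Ioo.prod isOpen_univ).mem_nhds ⟨hr, trivial⟩)).of_le
      (WithTop.coe_le_coe.2 le_top)
  have hsin : 0 < sin (2 * r) :=
    sin_pos_of_pos_of_lt_pi (by linarith [hr.1]) (by linarith [hr.2])
  exact stmt_16_general hf3 hsin.ne'
end

section
/- For every α > 2, every t > 0, every r ∈ (0, π/2) and z ∈ (-π, π), the heat kernel satisfies p_t(r, z) > 0 together with the Li–Yau type inequality: (∂_r p_t / p_t)² + tan²(r)·(∂_z p_t / p_t)² + (t/α)·(∂_z p_t / p_t)² ≤ ((3α - 1)/(α - 1) - 2t/α) · (∂_t p_t / p_t) + t/α - (3α - 1)/(α - 1) + (3α - 1)²/((α - 2)·t), where all partial derivatives are evaluated at (r, z) (and ∂_t p_t denotes the time derivative, which equals L p_t). -/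
open Real

/-- The Jacobi polynomial `P_k^{0,m}` defined by the Rodrigues-type formula. -/
noncomputable def jacobiP (k m : ℕ) (x : ℝ) : ℝ :=
  ((-1 : ℝ) ^ k / (2 ^ k * (Nat.factorial k : ℝ) * (1 + x) ^ m)) *
    iteratedDeriv k (fun y : ℝ => (1 + y) ^ m * (1 - y ^ 2) ^ k) x

/-- The general term of the double series defining the subelliptic heat kernel on `SU(2)`. -/
noncomputable def heatTerm (t r z : ℝ) (n : ℤ) (k : ℕ) : ℂ :=
  (((2 * (k : ℝ) + (n.natAbs : ℝ) + 1) *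
      Real.exp (-(4 * (k : ℝ) * ((k : ℝ) + (n.natAbs : ℝ) + 1) + 2 * (n.natAbs : ℝ)) * t) *
      (Real.cos r) ^ n.natAbs * jacobiP k n.natAbs (Real.cos (2 * r)) : ℝ) : ℂ) *
    Complex.exp ((n : ℂ) * (z : ℂ) * Complex.I)

/-- The subelliptic heat kernel `p_t(r,z)` on `SU(2)` in cylindric coordinates
(the double series is real-valued). -/
noncomputable def heatP (t r z : ℝ) : ℝ := (∑' n : ℤ, ∑' k : ℕ, heatTerm t r z n k).re

/-!
The kernel is a series in the disk polynomials, which are joint eigenfunctions of the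
sub-Laplacian `L = X² + Y²` and of `Z` among the polynomial functions on the sphere `SU(2)`.

For a positive finite combination `u` of these eigenfunctions evolved by the heat semigroup, the
Bochner formula and completion of squares show that, with the weights `a = t ^ (α - 1)` and
`b = (4 / α) t ^ α` and suitable `c` and `d`, the functional
`a |∇u|² / u + b (Z u)² / u - c L u - d u` is a subsolution of the heat equation vanishing at time
`0`. By the maximum principle on the compact sphere it is nonpositive, which is the Li–Yau
inequality for `u`.

Truncated Poisson kernels are positive initial data approximating the Dirac mass at the identity,
so the inequality passes to the heat kernel. The inequality also gives a Harnack inequality along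
curves issued from the identity, where the kernel is a sum of positive terms; hence the kernel is
positive everywhere.
-/

namespace SubellipticSU2

open Filter MvPolynomial Topology
open scoped ComplexConjugate

/-! ### Disk polynomials -/

/-- The disk (Zernike) polynomials in `x`, `y`, homogenised by `q`. With `y = conj x` and `q = 1`
they are the spherical functions attached to the cylindrical coordinates of `SU(2)`; the
three-term recursion is valid over any commutative ring. -/
def diskPoly {R : Type*} [CommRing R] (x y q : R) : ℕ → ℕ → R
  | a, 0 => x ^ a
  | 0, b + 1 => y ^ (b + 1)
  | a + 1, b + 1 =>
    x * diskPoly x y q a (b + 1) + y * diskPoly x y q (a + 1) b - q * diskPoly x y q a b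

section DiskPoly

variable {R : Type*} [CommRing R] (x y q : R)

@[simp]
lemma diskPoly_zero_right (a : ℕ) : diskPoly x y q a 0 = x ^ a := by
  cases a <;> simp [diskPoly]

@[simp]
lemma diskPoly_zero_left (b : ℕ) : diskPoly x y q 0 b = y ^ b := by
  cases b <;> simp [diskPoly]

lemma diskPoly_succ_succ (a b : ℕ) :
    diskPoly x y q (a + 1) (b + 1) =
      x * diskPoly x y q a (b + 1) + y * diskPoly x y q (a + 1) b - q * diskPoly x y q a b := by
  rw [diskPoly]

lemma grid_induction {P : ℕ → ℕ → Prop} (zero_right : ∀ a, P a 0) (zero_left : ∀ b, P 0 b)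
    (succ_succ : ∀ a b, P a b → P a (b + 1) → P (a + 1) b → P (a + 1) (b + 1)) (a b : ℕ) :
    P a b := by
  induction a generalizing b with
  | zero => exact zero_left b
  | succ a iha =>
    induction b with
    | zero => exact zero_right _
    | succ b ihb => exact succ_succ a b (iha b) (iha (b + 1)) ihb

lemma diskPoly_comm (a b : ℕ) : diskPoly x y q a b = diskPoly y x q b a := by
  induction a, b using grid_induction with
  | zero_right a => simp
  | zero_left b => simp
  | succ_succ a b h h₁ h₂ => rw [diskPoly_succ_succ, diskPoly_succ_succ, h, h₁, h₂]; ring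

lemma map_diskPoly {S : Type*} [CommRing S] (f : R →+* S) (a b : ℕ) :
    f (diskPoly x y q a b) = diskPoly (f x) (f y) (f q) a b := by
  induction a, b using grid_induction with
  | zero_right a => simp
  | zero_left b => simp
  | succ_succ a b h h₁ h₂ =>
    rw [diskPoly_succ_succ, diskPoly_succ_succ, ← h, ← h₁, ← h₂]
    simp only [map_sub, map_add, map_mul]

variable {k : Type*} [CommRing k] [Algebra k R] (D : Derivation k R R) {x y q}

lemma derivation_diskPoly_succ_succ (hq : D q = 0) (a b : ℕ) :
    D (diskPoly x y q (a + 1) (b + 1)) =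
      x * D (diskPoly x y q a (b + 1)) + diskPoly x y q a (b + 1) * D x +
        (y * D (diskPoly x y q (a + 1) b) + diskPoly x y q (a + 1) b * D y) -
        q * D (diskPoly x y q a b) := by
  simp only [diskPoly_succ_succ, map_sub, map_add, Derivation.leibniz, hq, smul_eq_mul, mul_zero,
    add_zero]

lemma mul_derivation_diskPoly_right {v v' : R} (hx : D x = 0) (hy : D y = v) (hq : D q = 0)
    (hxy : q = x * y + v * v') (a b : ℕ) :
    v' * D (diskPoly x y q a (b + 1)) =
      (b + 1) * (y * diskPoly x y q (a + 1) b - diskPoly x y q (a + 1) (b + 1)) := by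
  induction a, b using grid_induction with
  | zero_right a =>
    induction a with
    | zero => simp [diskPoly_succ_succ, hy, hxy]; ring
    | succ a ih =>
      have hrec := diskPoly_succ_succ x y q (a + 1) 0
      have hder := derivation_diskPoly_succ_succ (x := x) (y := y) D hq a 0
      simp only [zero_add, diskPoly_zero_right, Nat.cast_zero, hx, hy, Derivation.leibniz_pow,
        smul_zero] at ih hrec hder ⊢
      rw [hder, hrec]
      linear_combination x * ih - x ^ (a + 1) * hxy
  | zero_left b =>
    have hrec := diskPoly_succ_succ x y q 0 b
    simp only [zero_add, diskPoly_zero_left] at hrec ⊢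
    simp only [Derivation.leibniz_pow, hy, hrec, Nat.add_sub_cancel, smul_eq_mul, nsmul_eq_mul]
    push_cast
    linear_combination -(b + 1) * y ^ b * hxy
  | succ_succ a b h h₁ h₂ =>
    have hrec := diskPoly_succ_succ x y q (a + 1) b
    have hrec' := diskPoly_succ_succ x y q (a + 1) (b + 1)
    rw [derivation_diskPoly_succ_succ D hq, hx, hy]
    push_cast at h₁ ⊢
    linear_combination x * h₁ + y * h₂ - q * h + (b + 2) * hrec' - (b + 1) * y * hrec -
      diskPoly x y q (a + 1) (b + 1) * hxy

lemma mul_derivation_diskPoly_left {v v' : R} (hx : D x = v) (hy : D y = 0) (hq : D q = 0)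
    (hxy : q = x * y + v * v') (a b : ℕ) :
    v' * D (diskPoly x y q (a + 1) b) =
      (a + 1) * (x * diskPoly x y q a (b + 1) - diskPoly x y q (a + 1) (b + 1)) := by
  simpa only [diskPoly_comm y x] using
    mul_derivation_diskPoly_right D hy hx hq (by rw [hxy, mul_comm x y]) b a

end DiskPoly

/-! ### Left-invariant fields on `SU(2)` and their spherical functions -/

/-- Polynomial functions on `ℂ²`; the four variables stand for `w`, `conj w`, `v`, `conj v`. -/
abbrev SpherePoly : Type := MvPolynomial (Fin 4) ℂ

/-- The left-invariant vector field `X` of `SU(2)`, acting on polynomials. -/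
noncomputable def fieldX : Derivation ℂ SpherePoly SpherePoly :=
  mkDerivation ℂ ![X 3, X 2, -X 1, -X 0]

/-- The left-invariant vector field `Y` of `SU(2)`, acting on polynomials. -/
noncomputable def fieldY : Derivation ℂ SpherePoly SpherePoly :=
  mkDerivation ℂ ![-(Complex.I • X 3), Complex.I • X 2, Complex.I • X 1, -(Complex.I • X 0)]

/-- The left-invariant vector field `Z` of `SU(2)`, the missing vertical direction
`[X, Y] = 2 Z`. -/
noncomputable def fieldZ : Derivation ℂ SpherePoly SpherePoly :=
  mkDerivation ℂ ![Complex.I • X 0, -(Complex.I • X 1), Complex.I • X 2, -(Complex.I • X 3)]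

/-- The raising operator `E` in `X = E + F`, `Y = -i E + i F`. -/
noncomputable def raising : Derivation ℂ SpherePoly SpherePoly :=
  mkDerivation ℂ ![X 3, 0, -X 1, 0]

/-- The lowering operator `F` in `X = E + F`, `Y = -i E + i F`. -/
noncomputable def lowering : Derivation ℂ SpherePoly SpherePoly :=
  mkDerivation ℂ ![0, X 2, 0, -X 0]

lemma lie_fieldX_fieldY : ⁅fieldX, fieldY⁆ = 2 • fieldZ := by
  refine derivation_ext fun i => ?_
  fin_cases i <;> simp [Derivation.commutator_apply, fieldX, fieldY, fieldZ, two_nsmul] <;> module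

lemma lie_fieldY_fieldZ : ⁅fieldY, fieldZ⁆ = 2 • fieldX := by
  refine derivation_ext fun i => ?_
  fin_cases i <;>
    simp [Derivation.commutator_apply, fieldX, fieldY, fieldZ, smul_smul, two_nsmul] <;> module

lemma lie_fieldZ_fieldX : ⁅fieldZ, fieldX⁆ = 2 • fieldY := by
  refine derivation_ext fun i => ?_
  fin_cases i <;>
    simp [Derivation.commutator_apply, fieldX, fieldY, fieldZ, two_nsmul] <;> module

lemma fieldX_eq_raising_add_lowering : fieldX = raising + lowering := by
  refine derivation_ext fun i => ?_
  fin_cases i <;> simp [fieldX, raising, lowering]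

lemma fieldY_eq_raising_add_lowering :
    fieldY = -(Complex.I • raising) + Complex.I • lowering := by
  refine derivation_ext fun i => ?_
  fin_cases i <;> simp [fieldY, raising, lowering]

lemma fieldX_fieldY (f : SpherePoly) :
    fieldX (fieldY f) = fieldY (fieldX f) + 2 • fieldZ f := by
  rw [← Derivation.smul_apply, ← lie_fieldX_fieldY, Derivation.commutator_apply]; abel

lemma fieldY_fieldZ (f : SpherePoly) :
    fieldY (fieldZ f) = fieldZ (fieldY f) + 2 • fieldX f := by
  rw [← Derivation.smul_apply, ← lie_fieldY_fieldZ, Derivation.commutator_apply]; abel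

lemma fieldZ_fieldX (f : SpherePoly) :
    fieldZ (fieldX f) = fieldX (fieldZ f) + 2 • fieldY f := by
  rw [← Derivation.smul_apply, ← lie_fieldZ_fieldX, Derivation.commutator_apply]; abel

/-- The horizontal frame `X`, `Y`. -/
noncomputable def horizontalField : Fin 2 → Derivation ℂ SpherePoly SpherePoly :=
  ![fieldX, fieldY]

/-- The sub-Laplacian `L = X² + Y²`. -/
noncomputable def subLaplacian : Module.End ℂ SpherePoly :=
  ∑ j, (horizontalField j).toLinearMap ∘ₗ (horizontalField j).toLinearMap

lemma subLaplacian_apply (f : SpherePoly) :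
    subLaplacian f = fieldX (fieldX f) + fieldY (fieldY f) := by
  simp [subLaplacian, horizontalField]

lemma subLaplacian_fieldX (f : SpherePoly) :
    subLaplacian (fieldX f) =
      fieldX (subLaplacian f) - 4 • fieldY (fieldZ f) + 4 • fieldX f := by
  have hYX : fieldY (fieldX f) = fieldX (fieldY f) - 2 • fieldZ f :=
    eq_sub_of_add_eq (fieldX_fieldY f).symm
  have hZY : fieldZ (fieldY f) = fieldY (fieldZ f) - 2 • fieldX f :=
    eq_sub_of_add_eq (fieldY_fieldZ f).symm
  simp only [subLaplacian_apply, map_add, hYX, fieldX_fieldY (fieldY f), map_sub,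
    map_nsmul, hZY]
  module

lemma subLaplacian_fieldY (f : SpherePoly) :
    subLaplacian (fieldY f) =
      fieldY (subLaplacian f) + 4 • fieldX (fieldZ f) + 4 • fieldY f := by
  simp only [subLaplacian_apply, map_add, fieldX_fieldY f, fieldX_fieldY (fieldX f),
    map_nsmul, fieldZ_fieldX f]
  module

lemma subLaplacian_fieldZ (f : SpherePoly) :
    subLaplacian (fieldZ f) = fieldZ (subLaplacian f) := by
  have hXZ (g : SpherePoly) : fieldX (fieldZ g) = fieldZ (fieldX g) - 2 • fieldY g :=
    eq_sub_of_add_eq (fieldZ_fieldX g).symm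
  simp only [subLaplacian_apply, map_add, hXZ, fieldY_fieldZ, map_sub, map_nsmul]
  module

lemma subLaplacian_eq_raising_lowering (f : SpherePoly) :
    subLaplacian f = 2 * (raising (lowering f) + lowering (raising f)) := by
  simp only [subLaplacian_apply, fieldX_eq_raising_add_lowering, fieldY_eq_raising_add_lowering,
    Derivation.add_apply, Derivation.neg_apply, Derivation.smul_apply, map_add, map_neg,
    Derivation.map_smul, smul_add, smul_neg, smul_smul, Complex.I_mul_I, neg_smul, one_smul]
  ring

lemma subLaplacian_mul (f g : SpherePoly) :
    subLaplacian (f * g) = f * subLaplacian g + g * subLaplacian f +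
      4 * (raising f * lowering g + lowering f * raising g) := by
  simp only [subLaplacian_eq_raising_lowering, Derivation.leibniz, smul_eq_mul, map_add]
  ring

/-- The squared radius `|w|² + |v|²`, which equals `1` on the sphere. -/
noncomputable def radiusSq : SpherePoly := X 0 * X 1 + X 2 * X 3

@[simp]
lemma raising_radiusSq : raising radiusSq = 0 := by
  simp [raising, radiusSq, Derivation.leibniz]; ring

@[simp]
lemma lowering_radiusSq : lowering radiusSq = 0 := by
  simp [lowering, radiusSq, Derivation.leibniz]; ring

lemma raising_X_zero : raising (X 0) = X 3 := by simp [raising]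

lemma raising_X_one : raising (X 1) = 0 := by simp [raising]

lemma lowering_X_zero : lowering (X 0) = 0 := by simp [lowering]

lemma lowering_X_one : lowering (X 1) = X 2 := by simp [lowering]

lemma subLaplacian_radiusSq : subLaplacian radiusSq = 0 := by
  simp [subLaplacian_eq_raising_lowering]

lemma subLaplacian_X_zero : subLaplacian (X 0) = -2 * X 0 := by
  simp [subLaplacian_eq_raising_lowering, raising, lowering]

lemma subLaplacian_X_one : subLaplacian (X 1) = -2 * X 1 := by
  simp [subLaplacian_eq_raising_lowering, raising, lowering]

/-- The disk polynomials as polynomial functions on `ℂ²`; they are the joint eigenfunctions of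
`L` and `Z` in the expansion of the heat kernel. -/
noncomputable def spherical (a b : ℕ) : SpherePoly := diskPoly (X 0) (X 1) radiusSq a b

lemma spherical_succ_succ (a b : ℕ) :
    spherical (a + 1) (b + 1) =
      X 0 * spherical a (b + 1) + X 1 * spherical (a + 1) b - radiusSq * spherical a b :=
  diskPoly_succ_succ _ _ _ a b

lemma mul_lowering_spherical (a b : ℕ) :
    X 3 * lowering (spherical a (b + 1)) =
      ((b : SpherePoly) + 1) * (X 1 * spherical (a + 1) b - spherical (a + 1) (b + 1)) :=
  mul_derivation_diskPoly_right lowering lowering_X_zero lowering_X_one lowering_radiusSq rfl a b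

lemma mul_raising_spherical (a b : ℕ) :
    X 2 * raising (spherical (a + 1) b) =
      ((a : SpherePoly) + 1) * (X 0 * spherical a (b + 1) - spherical (a + 1) (b + 1)) :=
  mul_derivation_diskPoly_left raising raising_X_zero raising_X_one raising_radiusSq
    (by rw [radiusSq, mul_comm (X 2)]) a b

lemma subLaplacian_X_zero_pow (a : ℕ) :
    subLaplacian (X 0 ^ a) = -(2 * (a : SpherePoly)) * X 0 ^ a := by
  induction a with
  | zero => simp [subLaplacian_apply]
  | succ a ih =>
    rw [pow_succ', subLaplacian_mul, ih, subLaplacian_X_zero, Derivation.leibniz_pow,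
      lowering_X_zero]
    push_cast
    simp only [smul_zero]
    ring

lemma subLaplacian_X_one_pow (b : ℕ) :
    subLaplacian (X 1 ^ b) = -(2 * (b : SpherePoly)) * X 1 ^ b := by
  induction b with
  | zero => simp [subLaplacian_apply]
  | succ b ih =>
    rw [pow_succ', subLaplacian_mul, ih, subLaplacian_X_one, Derivation.leibniz_pow raising,
      raising_X_one]
    push_cast
    simp only [smul_zero]
    ring

/-- The rate at which the heat semigroup damps `spherical a b`. -/
def decayRate (a b : ℕ) : ℝ := 4 * a * b + 2 * a + 2 * b

lemma subLaplacian_spherical_eq_mul (a b : ℕ) :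
    subLaplacian (spherical a b) =
      -(4 * (a : SpherePoly) * b + 2 * a + 2 * b) * spherical a b := by
  induction a, b using grid_induction with
  | zero_right a => simp [spherical, subLaplacian_X_zero_pow]
  | zero_left b => simp [spherical, subLaplacian_X_one_pow]
  | succ_succ a b h h₁ h₂ =>
    have hE := mul_raising_spherical a b
    have hF := mul_lowering_spherical a b
    rw [spherical_succ_succ] at hE hF
    rw [spherical_succ_succ, map_sub, map_add, subLaplacian_mul, subLaplacian_mul,
      subLaplacian_mul, h, h₁, h₂, subLaplacian_X_zero, subLaplacian_X_one, subLaplacian_radiusSq,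
      raising_radiusSq, lowering_radiusSq, raising_X_zero, raising_X_one, lowering_X_zero,
      lowering_X_one]
    push_cast
    linear_combination 4 * hF + 4 * hE

lemma subLaplacian_spherical (a b : ℕ) :
    subLaplacian (spherical a b) = (-decayRate a b) • spherical a b := by
  rw [subLaplacian_spherical_eq_mul, decayRate, ← Complex.coe_smul, smul_eq_C_mul]
  congr 1
  simp only [Complex.ofReal_neg, Complex.ofReal_add, Complex.ofReal_mul, Complex.ofReal_ofNat,
    Complex.ofReal_natCast, map_neg, map_add, map_mul, map_natCast, map_ofNat]

/-! ### A parabolic maximum principle -/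

/-- `g` is differentiable near `x` and its derivative has derivative `c` at `x`. -/
def HasSecondDerivAt (g : ℝ → ℝ) (c x : ℝ) : Prop :=
  ∃ g' : ℝ → ℝ, (∀ᶠ s in 𝓝 x, HasDerivAt g (g' s) s) ∧ HasDerivAt g' c x

namespace HasSecondDerivAt

variable {f g : ℝ → ℝ} {c d x : ℝ}

lemma add (hf : HasSecondDerivAt f c x) (hg : HasSecondDerivAt g d x) :
    HasSecondDerivAt (fun s => f s + g s) (c + d) x := by
  obtain ⟨f', hf, hf'⟩ := hf
  obtain ⟨g', hg, hg'⟩ := hg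
  exact ⟨f' + g', hf.mp (hg.mono fun _ hg hf => hf.add hg), hf'.add hg'⟩

lemma const_mul (a : ℝ) (hf : HasSecondDerivAt f c x) :
    HasSecondDerivAt (fun s => a * f s) (a * c) x := by
  obtain ⟨f', hf, hf'⟩ := hf
  exact ⟨fun s => a * f' s, hf.mono fun _ hf => hf.const_mul a, hf'.const_mul a⟩

lemma add_const (a : ℝ) (hf : HasSecondDerivAt f c x) :
    HasSecondDerivAt (fun s => f s + a) c x := by
  obtain ⟨f', hf, hf'⟩ := hf
  exact ⟨f', hf.mono fun _ hf => hf.add_const a, hf'⟩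

lemma sq_div {f' g' : ℝ → ℝ} (hf : ∀ᶠ s in 𝓝 x, HasDerivAt f (f' s) s)
    (hf' : HasDerivAt f' c x) (hg : ∀ᶠ s in 𝓝 x, HasDerivAt g (g' s) s)
    (hg' : HasDerivAt g' d x) (hgx : g x ≠ 0) :
    HasSecondDerivAt (fun s => f s ^ 2 / g s)
      (2 / g x * (f' x - f x * g' x / g x) ^ 2 + 2 * f x * c / g x - f x ^ 2 * d / g x ^ 2) x := by
  have hne : ∀ᶠ s in 𝓝 x, g s ≠ 0 := hg.self_of_nhds.continuousAt.eventually_ne hgx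
  refine ⟨fun s => (2 * f s * f' s * g s - f s ^ 2 * g' s) / g s ^ 2, ?_, ?_⟩
  · filter_upwards [hf, hg, hne] with s hfs hgs hs
    simpa using (hfs.fun_pow 2).fun_div hgs hs
  · have hfx := hf.self_of_nhds
    have hgx' := hg.self_of_nhds
    refine (((((hfx.const_mul 2).mul hf').mul hgx').sub ((hfx.pow 2).mul hg')).div (hgx'.pow 2)
      (pow_ne_zero 2 hgx)).congr_deriv ?_
    simp only [Pi.mul_apply, Pi.sub_apply, Pi.pow_apply, Nat.cast_ofNat]
    field_simp
    ring

lemma nonpos_of_isLocalMax (hg : HasSecondDerivAt g c x) (hmax : IsLocalMax g x) : c ≤ 0 := by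
  obtain ⟨g', hg, hg'⟩ := hg
  have hderiv : deriv g =ᶠ[𝓝 x] g' := hg.mono fun s hs => hs.deriv
  have hderiv₂ : deriv (deriv g) x = c := hderiv.deriv_eq.trans hg'.deriv
  by_contra! hc
  have hmin : IsLocalMin g x :=
    isLocalMin_of_deriv_deriv_pos (hderiv₂ ▸ hc) hmax.deriv_eq_zero hg.self_of_nhds.continuousAt
  have hconst : g =ᶠ[𝓝 x] fun _ => g x := by
    filter_upwards [hmin, hmax] with s h₁ h₂ using le_antisymm h₂ h₁
  have : deriv (deriv g) x = 0 := by simpa using hconst.deriv.deriv_eq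
  exact hc.ne (this.symm.trans hderiv₂)

end HasSecondDerivAt

/-- The heat operator attached to a finite family of curves `γ i p` through each point `p`:
`∂ₜ H - ∑ i, d²/ds² H(t, γ i p s)` exists at `(t, p)` and equals `h`. -/
def HasHeatDefectAt {M ι : Type*} [Fintype ι] (γ : ι → M → ℝ → M) (H : ℝ → M → ℝ) (h t : ℝ)
    (p : M) : Prop :=
  ∃ (H' : ℝ) (c : ι → ℝ), HasDerivAt (fun τ => H τ p) H' t ∧
    (∀ i, HasSecondDerivAt (fun s => H t (γ i p s)) (c i) 0) ∧ h = H' - ∑ i, c i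

section MaximumPrinciple

variable {M ι : Type*} [Fintype ι] {γ : ι → M → ℝ → M} {H H₁ H₂ : ℝ → M → ℝ}
  {a : ℝ → ℝ} {a' h h₁ h₂ t T : ℝ} {p : M}

namespace HasHeatDefectAt

lemma add (hH₁ : HasHeatDefectAt γ H₁ h₁ t p) (hH₂ : HasHeatDefectAt γ H₂ h₂ t p) :
    HasHeatDefectAt γ (fun τ q => H₁ τ q + H₂ τ q) (h₁ + h₂) t p := by
  obtain ⟨d₁, c₁, hd₁, hc₁, rfl⟩ := hH₁
  obtain ⟨d₂, c₂, hd₂, hc₂, rfl⟩ := hH₂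
  refine ⟨d₁ + d₂, c₁ + c₂, hd₁.add hd₂, fun i => (hc₁ i).add (hc₂ i), ?_⟩
  simp only [Pi.add_apply, Finset.sum_add_distrib]
  ring

lemma time_mul (hH : HasHeatDefectAt γ H h t p) (ha : HasDerivAt a a' t) :
    HasHeatDefectAt γ (fun τ q => a τ * H τ q) (a' * H t p + a t * h) t p := by
  obtain ⟨d, c, hd, hc, rfl⟩ := hH
  refine ⟨a' * H t p + a t * d, fun i => a t * c i, ha.mul hd,
    fun i => (hc i).const_mul (a t), ?_⟩
  rw [← Finset.mul_sum]
  ring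

lemma add_time (hH : HasHeatDefectAt γ H h t p) (ha : HasDerivAt a a' t) :
    HasHeatDefectAt γ (fun τ q => H τ q + a τ) (h + a') t p := by
  obtain ⟨d, c, hd, hc, rfl⟩ := hH
  exact ⟨d + a', c, hd.add ha, fun i => (hc i).add_const (a t), by ring⟩

lemma nonneg_of_isMaxOn {K : Set M} (hH : HasHeatDefectAt γ H h t p)
    (hγ₀ : ∀ i, γ i p 0 = p) (hγK : ∀ i s, γ i p s ∈ K)
    (hp : p ∈ K) (ht : t ∈ Set.Ioc 0 T)
    (hmax : IsMaxOn (Function.uncurry H) (Set.Icc 0 T ×ˢ K) (t, p)) : 0 ≤ h := by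
  obtain ⟨d, c, hd, hc, rfl⟩ := hH
  have htT : t ∈ Set.Icc 0 T := Set.Ioc_subset_Icc_self ht
  have hspace (i : ι) : c i ≤ 0 := by
    refine (hc i).nonpos_of_isLocalMax (Eventually.of_forall fun s => ?_)
    change H t (γ i p s) ≤ H t (γ i p 0)
    rw [hγ₀]
    exact hmax (Set.mk_mem_prod htT (hγK i s))
  have htime : 0 ≤ d := by
    have hmax_t : IsLocalMaxOn (fun τ => H τ p) (Set.Icc 0 T) t :=
      IsMaxOn.localize fun τ hτ => hmax (Set.mk_mem_prod hτ hp)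
    have hcone : (-t : ℝ) ∈ posTangentConeAt (Set.Icc 0 T) t :=
      mem_posTangentConeAt_of_segment_subset <| by
        rw [add_neg_cancel]
        exact (convex_Icc 0 T).segment_subset htT ⟨le_rfl, ht.1.le.trans ht.2⟩
    have := hmax_t.hasFDerivWithinAt_nonpos hd.hasFDerivAt.hasFDerivWithinAt hcone
    simp only [ContinuousLinearMap.toSpanSingleton_apply, smul_eq_mul] at this
    nlinarith [ht.1]
  linarith [Finset.sum_nonpos fun i (_ : i ∈ Finset.univ) => hspace i]

end HasHeatDefectAt

/-- Subtracting `ε t` makes the defect strictly negative, which is impossible at an interior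
maximum. -/
theorem nonpos_of_heatDefect_nonpos [TopologicalSpace M] {K : Set M} (hK : IsCompact K)
    (hγ₀ : ∀ i, ∀ p ∈ K, γ i p 0 = p) (hγK : ∀ i, ∀ p ∈ K, ∀ s, γ i p s ∈ K)
    (hcont : ContinuousOn (Function.uncurry H) (Set.Icc 0 T ×ˢ K)) (hinit : ∀ p ∈ K, H 0 p ≤ 0)
    (hsub : ∀ t ∈ Set.Ioc 0 T, ∀ p ∈ K, ∃ h ≤ 0, HasHeatDefectAt γ H h t p)
    (hT : 0 ≤ T) (hp : p ∈ K) : H T p ≤ 0 := by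
  by_contra! hpos
  obtain ⟨ε, hε, hεT⟩ : ∃ ε > 0, ε * T < H T p := by
    refine ⟨H T p / (T + 1), by positivity, ?_⟩
    rw [div_mul_eq_mul_div, div_lt_iff₀ (by positivity)]
    nlinarith
  let G : ℝ → M → ℝ := fun t q => H t q + -ε * t
  have hG : ContinuousOn (Function.uncurry G) (Set.Icc 0 T ×ˢ K) :=
    hcont.add (continuous_const.mul continuous_fst).continuousOn
  have hTp : (T, p) ∈ Set.Icc 0 T ×ˢ K := ⟨⟨hT, le_rfl⟩, hp⟩
  obtain ⟨⟨t, q⟩, ⟨ht, hq⟩, hmax⟩ := (isCompact_Icc.prod hK).exists_isMaxOn ⟨_, hTp⟩ hG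
  have hGpos : 0 < G t q := (by simp only [G]; linarith : 0 < G T p).trans_le (hmax hTp)
  have ht₀ : 0 < t := by
    refine lt_of_le_of_ne ht.1 fun h0 => hGpos.not_ge ?_
    simpa [G, ← h0] using hinit q hq
  obtain ⟨h, hh, hdef⟩ := hsub t ⟨ht₀, ht.2⟩ q hq
  have := (hdef.add_time ((hasDerivAt_id t).const_mul (-ε))).nonneg_of_isMaxOn
    (fun i => hγ₀ i q hq) (fun i => hγK i q hq) hq ⟨ht₀, ht.2⟩ hmax
  linarith

end MaximumPrinciple

/-! ### Evaluation on the sphere and finite heat flows -/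

/-- The point `(w, v)` of `ℂ²` in the four variables `w`, `conj w`, `v`, `conj v`. -/
noncomputable def coords (p : ℂ × ℂ) : Fin 4 → ℂ := ![p.1, conj p.1, p.2, conj p.2]

/-- The real part of the value of a polynomial at a point. All functions met below are real on the
sphere, so nothing is lost by taking real parts at once. -/
noncomputable def realEval (p : ℂ × ℂ) : SpherePoly →ₗ[ℝ] ℝ :=
  Complex.reLm ∘ₗ (aeval (coords p) : SpherePoly →ₐ[ℂ] ℂ).toLinearMap.restrictScalars ℝ

lemma realEval_apply (p : ℂ × ℂ) (f : SpherePoly) : realEval p f = (eval (coords p) f).re := by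
  simp [realEval, aeval_eq_eval]

lemma continuous_coords : Continuous coords := by
  refine continuous_pi fun i => ?_
  fin_cases i
  exacts [continuous_fst, Complex.continuous_conj.comp continuous_fst, continuous_snd,
    Complex.continuous_conj.comp continuous_snd]

lemma continuous_realEval (f : SpherePoly) : Continuous fun p => realEval p f := by
  simp only [realEval_apply]
  exact Complex.continuous_re.comp ((continuous_eval f).comp continuous_coords)

lemma hasDerivAt_eval_of_integralCurve {c : ℝ → Fin 4 → ℂ} {s : ℝ}
    (D : Derivation ℂ SpherePoly SpherePoly)
    (hc : ∀ i, HasDerivAt (fun s => c s i) (eval (c s) (D (X i))) s) (f : SpherePoly) :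
    HasDerivAt (fun s => eval (c s) f) (eval (c s) (D f)) s := by
  induction f using MvPolynomial.induction_on with
  | C a => simpa [← algebraMap_eq] using hasDerivAt_const s a
  | add f g hf hg => simpa using hf.fun_add hg
  | mul_X f i hf =>
    simp only [eval_mul, eval_X, Derivation.leibniz, smul_eq_mul, map_add]
    exact (hf.fun_mul (hc i)).congr_deriv (by ring)

lemma hasDerivAt_re {g : ℝ → ℂ} {g' : ℂ} {s : ℝ} (hg : HasDerivAt g g' s) :
    HasDerivAt (fun s => (g s).re) g'.re s :=
  Complex.reCLM.hasFDerivAt.comp_hasDerivAt s hg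

lemma hasDerivAt_conj {g : ℝ → ℂ} {g' : ℂ} {s : ℝ} (hg : HasDerivAt g g' s) :
    HasDerivAt (fun s => conj (g s)) (conj g') s :=
  Complex.conjCLE.toContinuousLinearMap.hasFDerivAt.comp_hasDerivAt s hg

lemma hasDerivAt_realEval_of_integralCurve {γ : ℝ → ℂ × ℂ} {s : ℝ} {w' v' : ℂ}
    (D : Derivation ℂ SpherePoly SpherePoly)
    (hw : HasDerivAt (fun s => (γ s).1) w' s) (hv : HasDerivAt (fun s => (γ s).2) v' s)
    (hD : ∀ i, eval (coords (γ s)) (D (X i)) = coords (w', v') i) (f : SpherePoly) :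
    HasDerivAt (fun s => realEval (γ s) f) (realEval (γ s) (D f)) s := by
  simp only [realEval_apply]
  refine hasDerivAt_re (hasDerivAt_eval_of_integralCurve (c := fun s => coords (γ s)) D
    (fun i => ?_) f)
  rw [hD i]
  fin_cases i
  exacts [hw, hasDerivAt_conj hw, hv, hasDerivAt_conj hv]

/-- The flow of `X`, a right translation by a one-parameter subgroup of `SU(2)`. -/
noncomputable def flowX (p : ℂ × ℂ) (s : ℝ) : ℂ × ℂ :=
  (cos s * p.1 + sin s * conj p.2, cos s * p.2 - sin s * conj p.1)

/-- The flow of `Y`, a right translation by a one-parameter subgroup of `SU(2)`. -/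
noncomputable def flowY (p : ℂ × ℂ) (s : ℝ) : ℂ × ℂ :=
  (cos s * p.1 - sin s * (Complex.I * conj p.2), cos s * p.2 + sin s * (Complex.I * conj p.1))

/-- The flows of the horizontal frame `horizontalField`. -/
noncomputable def horizontalFlow : Fin 2 → ℂ × ℂ → ℝ → ℂ × ℂ := ![flowX, flowY]

/-- The unit sphere of `ℂ²`, that is, the group `SU(2)`. -/
def sphere : Set (ℂ × ℂ) := {p | Complex.normSq p.1 + Complex.normSq p.2 = 1}

lemma isCompact_sphere : IsCompact sphere := by
  refine Metric.isCompact_of_isClosed_isBounded ?_ ?_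
  · exact isClosed_eq ((Complex.continuous_normSq.comp continuous_fst).add
      (Complex.continuous_normSq.comp continuous_snd)) continuous_const
  · refine (Metric.isBounded_closedBall (x := (0 : ℂ × ℂ)) (r := 1)).subset fun p hp => ?_
    simp only [sphere, Set.mem_ofPred_eq, Complex.normSq_eq_norm_sq] at hp
    rw [mem_closedBall_zero_iff, Prod.norm_def, max_le_iff]
    constructor <;> nlinarith [norm_nonneg p.1, norm_nonneg p.2]

lemma horizontalFlow_zero (j : Fin 2) (p : ℂ × ℂ) : horizontalFlow j p 0 = p := by
  fin_cases j <;> simp [horizontalFlow, flowX, flowY]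

lemma horizontalFlow_mem_sphere (j : Fin 2) {p : ℂ × ℂ} (hp : p ∈ sphere) (s : ℝ) :
    horizontalFlow j p s ∈ sphere := by
  simp only [sphere, Set.mem_ofPred_eq, Complex.normSq_apply] at *
  fin_cases j <;>
  · simp [horizontalFlow, flowX, flowY, -Complex.ofReal_cos, -Complex.ofReal_sin]
    linear_combination (cos s ^ 2 + sin s ^ 2) * hp + sin_sq_add_cos_sq s

lemma hasDerivAt_cos_mul (c : ℂ) (s : ℝ) :
    HasDerivAt (fun s : ℝ => (cos s : ℂ) * c) (-(sin s : ℂ) * c) s := by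
  simpa using (hasDerivAt_cos s).ofReal_comp.mul_const c

lemma hasDerivAt_sin_mul (c : ℂ) (s : ℝ) :
    HasDerivAt (fun s : ℝ => (sin s : ℂ) * c) ((cos s : ℂ) * c) s := by
  simpa using (hasDerivAt_sin s).ofReal_comp.mul_const c

lemma hasDerivAt_realEval_flowX (p : ℂ × ℂ) (f : SpherePoly) (s : ℝ) :
    HasDerivAt (fun s => realEval (flowX p s) f) (realEval (flowX p s) (fieldX f)) s := by
  refine hasDerivAt_realEval_of_integralCurve (γ := flowX p) fieldX
    ((hasDerivAt_cos_mul p.1 s).add (hasDerivAt_sin_mul _ s))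
    ((hasDerivAt_cos_mul p.2 s).sub (hasDerivAt_sin_mul _ s)) (fun i => ?_) f
  fin_cases i <;>
    simp [fieldX, coords, flowX, -Complex.ofReal_cos, -Complex.ofReal_sin] <;> ring

lemma hasDerivAt_realEval_flowY (p : ℂ × ℂ) (f : SpherePoly) (s : ℝ) :
    HasDerivAt (fun s => realEval (flowY p s) f) (realEval (flowY p s) (fieldY f)) s := by
  refine hasDerivAt_realEval_of_integralCurve (γ := flowY p) fieldY
    ((hasDerivAt_cos_mul p.1 s).sub (hasDerivAt_sin_mul _ s))
    ((hasDerivAt_cos_mul p.2 s).add (hasDerivAt_sin_mul _ s)) (fun i => ?_) f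
  fin_cases i <;>
    simp [fieldY, coords, flowY, smul_eval, -Complex.ofReal_cos, -Complex.ofReal_sin] <;>
    ring_nf <;> simp [-Complex.ofReal_cos, -Complex.ofReal_sin] <;> ring

lemma hasDerivAt_realEval_horizontalFlow (j : Fin 2) (p : ℂ × ℂ) (f : SpherePoly) (s : ℝ) :
    HasDerivAt (fun s => realEval (horizontalFlow j p s) f)
      (realEval (horizontalFlow j p s) (horizontalField j f)) s := by
  fin_cases j
  exacts [hasDerivAt_realEval_flowX p f s, hasDerivAt_realEval_flowY p f s]

lemma realEval_subLaplacian (p : ℂ × ℂ) (f : SpherePoly) :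
    realEval p (subLaplacian f) =
      ∑ j, realEval p (horizontalField j (horizontalField j f)) := by
  simp [subLaplacian]

/-- A finite superposition of eigenfunctions evolved by the heat semigroup of `L`. -/
noncomputable def heatFlow (s : Finset (ℕ × ℕ)) (c : ℕ × ℕ → ℝ) (t : ℝ) : SpherePoly :=
  ∑ i ∈ s, (c i * exp (-decayRate i.1 i.2 * t)) • spherical i.1 i.2

section HeatFlow

variable {s : Finset (ℕ × ℕ)} {c : ℕ × ℕ → ℝ}

lemma realEval_map_heatFlow (D : Module.End ℂ SpherePoly) (p : ℂ × ℂ) (t : ℝ) :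
    realEval p (D (heatFlow s c t)) =
      ∑ i ∈ s, c i * exp (-decayRate i.1 i.2 * t) * realEval p (D (spherical i.1 i.2)) := by
  simp only [heatFlow, map_sum, LinearMap.map_smul_of_tower, map_smul, smul_eq_mul]

lemma hasDerivAt_realEval_heatFlow (D : Module.End ℂ SpherePoly) (p : ℂ × ℂ) (t : ℝ) :
    HasDerivAt (fun t => realEval p (D (heatFlow s c t)))
      (realEval p (D (subLaplacian (heatFlow s c t)))) t := by
  simp only [← Module.End.mul_apply, realEval_map_heatFlow]
  refine HasDerivAt.fun_sum fun i _ => ?_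
  have hexp : HasDerivAt (fun t => exp (-decayRate i.1 i.2 * t))
      (exp (-decayRate i.1 i.2 * t) * -decayRate i.1 i.2) t := by
    simpa using ((hasDerivAt_id t).const_mul (-decayRate i.1 i.2)).exp
  refine ((hexp.const_mul (c i)).mul_const _).congr_deriv ?_
  rw [Module.End.mul_apply, subLaplacian_spherical, LinearMap.map_smul_of_tower, map_smul,
    smul_eq_mul]
  ring

lemma continuous_realEval_heatFlow (D : Module.End ℂ SpherePoly) :
    Continuous fun q : ℝ × (ℂ × ℂ) => realEval q.2 (D (heatFlow s c q.1)) := by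
  simp only [realEval_map_heatFlow]
  refine continuous_finsetSum _ fun i _ => Continuous.mul (by fun_prop) ?_
  exact (continuous_realEval _).comp continuous_snd

lemma hasHeatDefectAt_heatFlow (D : Module.End ℂ SpherePoly) (t : ℝ) (p : ℂ × ℂ) :
    HasHeatDefectAt horizontalFlow (fun τ q => realEval q (D (heatFlow s c τ)))
      (realEval p (D (subLaplacian (heatFlow s c t)) - subLaplacian (D (heatFlow s c t)))) t p := by
  refine ⟨_, fun j => realEval p (horizontalField j (horizontalField j (D (heatFlow s c t)))),
    hasDerivAt_realEval_heatFlow D p t, fun j => ?_, ?_⟩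
  · refine ⟨_, .of_forall (hasDerivAt_realEval_horizontalFlow j p _), ?_⟩
    simpa only [horizontalFlow_zero] using hasDerivAt_realEval_horizontalFlow j p _ 0
  · rw [map_sub, realEval_subLaplacian]

lemma hasHeatDefectAt_sq_div (D : Module.End ℂ SpherePoly) {t : ℝ} {p : ℂ × ℂ}
    (hu : realEval p (heatFlow s c t) ≠ 0) :
    HasHeatDefectAt horizontalFlow
      (fun τ q => realEval q (D (heatFlow s c τ)) ^ 2 / realEval q (heatFlow s c τ))
      (2 * realEval p (D (heatFlow s c t)) * realEval p
          (D (subLaplacian (heatFlow s c t)) - subLaplacian (D (heatFlow s c t))) /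
          realEval p (heatFlow s c t) -
        ∑ j, 2 / realEval p (heatFlow s c t) *
          (realEval p (horizontalField j (D (heatFlow s c t))) -
            realEval p (D (heatFlow s c t)) * realEval p (horizontalField j (heatFlow s c t)) /
              realEval p (heatFlow s c t)) ^ 2) t p := by
  have hflow := fun j f => hasDerivAt_realEval_horizontalFlow j p f
  have hspace (j : Fin 2) := HasSecondDerivAt.sq_div (.of_forall (hflow j (D (heatFlow s c t))))
    (hflow j _ 0) (.of_forall (hflow j (heatFlow s c t))) (hflow j _ 0)
    (by rwa [horizontalFlow_zero])
  refine ⟨_, _, ((hasDerivAt_realEval_heatFlow D p t).fun_pow 2).fun_div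
    (hasDerivAt_realEval_heatFlow LinearMap.id p t) hu, hspace, ?_⟩
  simp only [horizontalFlow_zero, LinearMap.id_apply, map_sub, realEval_subLaplacian,
    Fin.sum_univ_two]
  field_simp
  ring

lemma realEval_heatFlow_pos (hpos : ∀ p ∈ sphere, 0 < realEval p (heatFlow s c 0)) {t : ℝ}
    (ht : 0 ≤ t) {p : ℂ × ℂ} (hp : p ∈ sphere) : 0 < realEval p (heatFlow s c t) := by
  obtain ⟨p₀, hp₀, hmin⟩ := isCompact_sphere.exists_isMinOn ⟨p, hp⟩
    (continuous_realEval (heatFlow s c 0)).continuousOn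
  have hle : -1 * realEval p (heatFlow s c t) + realEval p₀ (heatFlow s c 0) ≤ 0 := by
    refine nonpos_of_heatDefect_nonpos (γ := horizontalFlow)
      (H := fun t p => -1 * realEval p (heatFlow s c t) + realEval p₀ (heatFlow s c 0))
      isCompact_sphere (fun j p _ => horizontalFlow_zero j p)
      (fun j p hp => horizontalFlow_mem_sphere j hp) ?_ (fun q hq => ?_) (fun t _ q _ => ?_) ht hp
    · exact ((continuous_realEval_heatFlow LinearMap.id).const_mul (-1) |>.add
        continuous_const).continuousOn
    · linarith [isMinOn_iff.mp hmin q hq]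
    · refine ⟨_, ?_, ((hasHeatDefectAt_heatFlow LinearMap.id t q).time_mul
        (hasDerivAt_const t (-1))).add_time (hasDerivAt_const t _)⟩
      simp
  linarith [hpos p₀ hp₀]

end HeatFlow

/-! ### The Li–Yau inequality for finite heat flows -/

lemma realEval_commutator_fieldX (p : ℂ × ℂ) (f : SpherePoly) :
    realEval p (fieldX (subLaplacian f) - subLaplacian (fieldX f)) =
      4 * realEval p (fieldY (fieldZ f)) - 4 * realEval p (fieldX f) := by
  rw [subLaplacian_fieldX]
  simp only [map_sub, map_add, map_nsmul]
  simp only [nsmul_eq_mul, Nat.cast_ofNat]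
  ring

lemma realEval_commutator_fieldY (p : ℂ × ℂ) (f : SpherePoly) :
    realEval p (fieldY (subLaplacian f) - subLaplacian (fieldY f)) =
      -4 * realEval p (fieldX (fieldZ f)) - 4 * realEval p (fieldY f) := by
  rw [subLaplacian_fieldY]
  simp only [map_sub, map_add, map_nsmul]
  simp only [nsmul_eq_mul, Nat.cast_ofNat]
  ring

/-- Time weights for which `a |∇u|²/u + b (Zu)²/u - c Lu - d u` is a subsolution of the heat
equation that vanishes at time `0`, for every positive solution `u`. The function `m` is the free
parameter in `2 (Hess)² ≥ -m Lu - m² u/4`. -/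
structure IsLiYauWeight (a b c d m : ℝ → ℝ) : Prop where
  continuous_a : Continuous a
  continuous_b : Continuous b
  continuous_c : Continuous c
  continuous_d : Continuous d
  a_zero : a 0 = 0
  b_zero : b 0 = 0
  c_zero : c 0 = 0
  d_zero : d 0 = 0
  a_pos : ∀ t > 0, 0 < a t
  b_pos : ∀ t > 0, 0 < b t
  differentiableAt_a : ∀ t > 0, DifferentiableAt ℝ a t
  deriv_a_le : ∀ t > 0, deriv a t ≤ (m t + 8 - 8 * a t / b t) * a t
  hasDerivAt_b : ∀ t > 0, HasDerivAt b (4 * a t) t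
  hasDerivAt_c : ∀ t > 0, HasDerivAt c (m t * a t) t
  hasDerivAt_d : ∀ t > 0, HasDerivAt d (m t ^ 2 / 4 * a t) t

/-- The Li–Yau functional `a |∇u|²/u + b (Zu)²/u - c Lu - d u`. -/
noncomputable def liYauFunctional (a b c d : ℝ) (u : SpherePoly) (p : ℂ × ℂ) : ℝ :=
  a * (realEval p (fieldX u) ^ 2 / realEval p u) + a * (realEval p (fieldY u) ^ 2 / realEval p u) +
    b * (realEval p (fieldZ u) ^ 2 / realEval p u) + -c * realEval p (subLaplacian u) +
    -d * realEval p u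

/-- The pointwise inequality behind the generalised curvature-dimension condition. The `h`s stand
for the horizontal Hessian of `log u`, whose antisymmetric part is `Z log u`, and `k₁`, `k₂` for
the horizontal gradient of `Z log u`; the mixed terms are absorbed by completing squares. -/
lemma bochner_nonpos {k m P u x y ζ l h₁₁ h₁₂ h₂₁ h₂₂ k₁ k₂ : ℝ} (hk : 0 < k)
    (hP : P ≤ m + 8 - 2 / k) (hl : l * u = (h₁₁ + h₂₂) * u + (x ^ 2 + y ^ 2))
    (hζ : h₁₂ - h₂₁ = 2 * ζ) :
    P * (x ^ 2 + y ^ 2) + 4 * ζ ^ 2 - m * (l * u) - m ^ 2 / 4 * u ^ 2 + 8 * (x * k₂ - y * k₁) -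
      8 * (x ^ 2 + y ^ 2) - 2 * (h₁₁ ^ 2 + h₁₂ ^ 2 + h₂₁ ^ 2 + h₂₂ ^ 2) -
      8 * k * (k₁ ^ 2 + k₂ ^ 2) ≤ 0 := by
  have hsquares : 8 * (x * k₂ - y * k₁) - 8 * k * (k₁ ^ 2 + k₂ ^ 2) =
      2 / k * (x ^ 2 + y ^ 2) - 8 * k * ((k₂ - x / (2 * k)) ^ 2 + (k₁ + y / (2 * k)) ^ 2) := by
    field_simp
    ring
  have hnonneg : 0 ≤ 8 * k * ((k₂ - x / (2 * k)) ^ 2 + (k₁ + y / (2 * k)) ^ 2) := by positivity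
  obtain rfl : ζ = (h₁₂ - h₂₁) / 2 := by linarith
  rw [hl]
  nlinarith [sq_nonneg (h₁₁ + h₂₂ + m * u / 2), sq_nonneg (h₁₁ - h₂₂), sq_nonneg (h₁₂ + h₂₁),
    mul_nonneg (sub_nonneg.mpr hP) (add_nonneg (sq_nonneg x) (sq_nonneg y))]

namespace IsLiYauWeight

variable {a b c d m : ℝ → ℝ} {s : Finset (ℕ × ℕ)} {coeff : ℕ × ℕ → ℝ} {t : ℝ} {p : ℂ × ℂ}

lemma exists_heatDefect_nonpos (h : IsLiYauWeight a b c d m) (ht : 0 < t)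
    (hu : 0 < realEval p (heatFlow s coeff t)) :
    ∃ δ ≤ 0, HasHeatDefectAt horizontalFlow
      (fun τ => liYauFunctional (a τ) (b τ) (c τ) (d τ) (heatFlow s coeff τ)) δ t p := by
  have ha := (h.differentiableAt_a t ht).hasDerivAt
  refine ⟨_, ?_, (((((hasHeatDefectAt_sq_div fieldX.toLinearMap hu.ne').time_mul ha).add
    ((hasHeatDefectAt_sq_div fieldY.toLinearMap hu.ne').time_mul ha)).add
    ((hasHeatDefectAt_sq_div fieldZ.toLinearMap hu.ne').time_mul (h.hasDerivAt_b t ht))).add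
    ((hasHeatDefectAt_heatFlow subLaplacian t p).time_mul (h.hasDerivAt_c t ht).neg)).add
    ((hasHeatDefectAt_heatFlow LinearMap.id t p).time_mul (h.hasDerivAt_d t ht).neg)⟩
  have hapos := h.a_pos t ht
  have hbpos := h.b_pos t ht
  have hlaplace := congrArg (realEval p) (subLaplacian_apply (heatFlow s coeff t))
  have hcomm := congrArg (realEval p) (fieldX_fieldY (heatFlow s coeff t))
  rw [map_add] at hlaplace
  rw [map_add, map_nsmul, nsmul_eq_mul, Nat.cast_ofNat] at hcomm
  simp only [Derivation.coeFn_coe, LinearMap.id_apply,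
    realEval_commutator_fieldX, realEval_commutator_fieldY, subLaplacian_fieldZ, sub_self, map_zero,
    Fin.sum_univ_two, horizontalField, Matrix.cons_val_zero, Matrix.cons_val_one]
  set f := heatFlow s coeff t
  set u := realEval p f
  set x := realEval p (fieldX f)
  set y := realEval p (fieldY f)
  set ζ := realEval p (fieldZ f)
  have hbochner := bochner_nonpos (k := b t / (4 * a t)) (m := m t) (P := deriv a t / a t) (u := u)
    (x := x) (y := y) (ζ := ζ) (l := realEval p (subLaplacian f))
    (h₁₁ := realEval p (fieldX (fieldX f)) - x * x / u)
    (h₁₂ := realEval p (fieldX (fieldY f)) - y * x / u)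
    (h₂₁ := realEval p (fieldY (fieldX f)) - x * y / u)
    (h₂₂ := realEval p (fieldY (fieldY f)) - y * y / u)
    (k₁ := realEval p (fieldX (fieldZ f)) - ζ * x / u)
    (k₂ := realEval p (fieldY (fieldZ f)) - ζ * y / u)
    (by positivity)
    (by
      rw [div_le_iff₀ hapos, div_div_eq_mul_div, ← mul_assoc]
      norm_num only
      exact h.deriv_a_le t ht)
    (by rw [hlaplace]; field_simp; ring) (by linear_combination hcomm)
  refine le_of_eq_of_le ?_ (mul_nonpos_of_nonneg_of_nonpos (div_nonneg hapos.le hu.le) hbochner)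
  field_simp
  ring

lemma continuousOn_liYauFunctional (h : IsLiYauWeight a b c d m)
    (hpos : ∀ p ∈ sphere, 0 < realEval p (heatFlow s coeff 0)) :
    ContinuousOn (Function.uncurry fun τ =>
      liYauFunctional (a τ) (b τ) (c τ) (d τ) (heatFlow s coeff τ)) (Set.Icc 0 t ×ˢ sphere) := by
  have hcont (D : Module.End ℂ SpherePoly) :=
    (continuous_realEval_heatFlow (s := s) (c := coeff) D).continuousOn (s := Set.Icc 0 t ×ˢ sphere)
  have hweight {f : ℝ → ℝ} (hf : Continuous f) :
      ContinuousOn (fun q : ℝ × (ℂ × ℂ) => f q.1) (Set.Icc 0 t ×ˢ sphere) :=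
    (hf.comp continuous_fst).continuousOn
  have hquot (D : Module.End ℂ SpherePoly) := ((hcont D).pow 2).div (hcont LinearMap.id)
    fun q hq => (realEval_heatFlow_pos hpos hq.1.1 hq.2).ne'
  exact (((((hweight h.continuous_a).mul (hquot fieldX.toLinearMap)).add
    ((hweight h.continuous_a).mul (hquot fieldY.toLinearMap))).add
    ((hweight h.continuous_b).mul (hquot fieldZ.toLinearMap))).add
    ((hweight h.continuous_c).neg.mul (hcont subLaplacian))).add
    ((hweight h.continuous_d).neg.mul (hcont LinearMap.id))

theorem liYauFunctional_nonpos (h : IsLiYauWeight a b c d m)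
    (hpos : ∀ p ∈ sphere, 0 < realEval p (heatFlow s coeff 0)) (ht : 0 ≤ t) (hp : p ∈ sphere) :
    liYauFunctional (a t) (b t) (c t) (d t) (heatFlow s coeff t) p ≤ 0 := by
  refine nonpos_of_heatDefect_nonpos (γ := horizontalFlow)
    (H := fun τ => liYauFunctional (a τ) (b τ) (c τ) (d τ) (heatFlow s coeff τ))
    isCompact_sphere (fun j p _ => horizontalFlow_zero j p)
    (fun j p hp => horizontalFlow_mem_sphere j hp) (h.continuousOn_liYauFunctional hpos)
    (fun q _ => ?_) (fun τ hτ q hq => ?_) ht hp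
  · simp [liYauFunctional, h.a_zero, h.b_zero, h.c_zero, h.d_zero]
  · exact h.exists_heatDefect_nonpos hτ.1 (realEval_heatFlow_pos hpos hτ.1.le hq)

end IsLiYauWeight

lemma isLiYauWeight_rpow {α δ : ℝ} (hα : 2 < α) (hδ : δ ≤ 8) :
    IsLiYauWeight (fun t => t ^ (α - 1)) (fun t => 4 / α * t ^ α)
      (fun t => (3 * α - 1) / (α - 1) * t ^ (α - 1) - δ / α * t ^ α)
      (fun t => δ ^ 2 / (4 * α) * t ^ α - δ * ((3 * α - 1) / (α - 1)) / 2 * t ^ (α - 1) +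
        (3 * α - 1) ^ 2 / (α - 2) / 4 * t ^ (α - 2))
      (fun t => (3 * α - 1) / t - δ) := by
  have hα₀ : 0 < α := by linarith
  have hα₁ : 0 < α - 1 := by linarith
  have hα₂ : 0 < α - 2 := by linarith
  have hcont₀ := continuous_rpow_const hα₀.le
  have hcont₁ := continuous_rpow_const hα₁.le
  have hcont₂ := continuous_rpow_const hα₂.le
  have hpow {t : ℝ} (ht : 0 < t) : t ^ α = t ^ (α - 1) * t := by
    rw [← rpow_add_one ht.ne', sub_add_cancel]
  have hpow' {t : ℝ} (ht : 0 < t) : t ^ (α - 2 - 1) = t ^ (α - 1) / t ^ 2 := by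
    rw [← rpow_natCast, ← rpow_sub ht]
    ring_nf
  have hderiv {t : ℝ} (β : ℝ) (ht : 0 < t) : HasDerivAt (fun t => t ^ β) (β * t ^ (β - 1)) t :=
    hasDerivAt_rpow_const (Or.inl ht.ne')
  refine ⟨hcont₁, by fun_prop, by fun_prop, by fun_prop, ?_, ?_, ?_, ?_, fun t ht => by positivity,
    fun t ht => by positivity, fun t ht => (hderiv _ ht).differentiableAt, fun t ht => ?_,
    fun t ht => ?_, fun t ht => ?_, fun t ht => ?_⟩
  iterate 4 simp [zero_rpow, hα₀.ne', hα₁.ne', hα₂.ne']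
  · have hq : 0 < t ^ (α - 1) := rpow_pos_of_pos ht _
    rw [(hderiv _ ht).deriv, rpow_sub_one ht.ne', hpow ht]
    rw [mul_div_left_comm, mul_comm]
    refine mul_le_mul_of_nonneg_right ?_ hq.le
    field_simp
    nlinarith
  · refine ((hderiv _ ht).const_mul _).congr_deriv ?_
    field_simp
  · refine (((hderiv _ ht).const_mul _).fun_sub ((hderiv _ ht).const_mul _)).congr_deriv ?_
    rw [rpow_sub_one ht.ne']
    field_simp
  · refine ((((hderiv _ ht).const_mul _).fun_sub ((hderiv _ ht).const_mul _)).fun_add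
      ((hderiv _ ht).const_mul _)).congr_deriv ?_
    rw [rpow_sub_one ht.ne' (α - 1), hpow' ht]
    field_simp
    ring

theorem liYau_heatFlow {α δ t : ℝ} {s : Finset (ℕ × ℕ)} {coeff : ℕ × ℕ → ℝ} {p : ℂ × ℂ}
    (hα : 2 < α) (hδ : δ ≤ 8) (hpos : ∀ p ∈ sphere, 0 < realEval p (heatFlow s coeff 0))
    (ht : 0 < t) (hp : p ∈ sphere) :
    realEval p (fieldX (heatFlow s coeff t)) ^ 2 + realEval p (fieldY (heatFlow s coeff t)) ^ 2 +
        4 * t / α * realEval p (fieldZ (heatFlow s coeff t)) ^ 2 ≤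
      ((3 * α - 1) / (α - 1) - δ * t / α) * realEval p (subLaplacian (heatFlow s coeff t)) *
          realEval p (heatFlow s coeff t) +
        (δ ^ 2 * t / (4 * α) - δ * ((3 * α - 1) / (α - 1)) / 2 +
          (3 * α - 1) ^ 2 / (4 * (α - 2) * t)) * realEval p (heatFlow s coeff t) ^ 2 := by
  have hu := realEval_heatFlow_pos hpos ht.le hp
  have hα₁ : 0 < α - 1 := by linarith
  have hα₂ : 0 < α - 2 := by linarith
  have hq : 0 < t ^ (α - 1) := rpow_pos_of_pos ht _
  have hweighted := (isLiYauWeight_rpow hα hδ).liYauFunctional_nonpos hpos ht.le hp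
  have hpow : t ^ α = t ^ (α - 1) * t := by rw [← rpow_add_one ht.ne', sub_add_cancel]
  have hpow' : t ^ (α - 2) = t ^ (α - 1) / t := by rw [← rpow_sub_one ht.ne']; ring_nf
  simp only [liYauFunctional, hpow, hpow'] at hweighted
  rw [← sub_nonpos]
  refine le_of_eq_of_le ?_ (mul_nonpos_of_nonneg_of_nonpos (div_nonneg hu.le hq.le) hweighted)
  field_simp
  ring

/-! ### Cylindrical coordinates -/

@[simp]
lemma fieldX_radiusSq : fieldX radiusSq = 0 := by
  rw [fieldX_eq_raising_add_lowering]; simp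

@[simp]
lemma fieldY_radiusSq : fieldY radiusSq = 0 := by
  rw [fieldY_eq_raising_add_lowering]; simp

@[simp]
lemma fieldZ_radiusSq : fieldZ radiusSq = 0 := by
  simp [fieldZ, radiusSq, Derivation.leibniz, mul_comm]

lemma eval_radiusSq {p : ℂ × ℂ} (hp : p ∈ sphere) : eval (coords p) radiusSq = 1 := by
  simp only [radiusSq, map_add, map_mul, eval_X]
  simpa [coords, Complex.mul_conj] using mod_cast hp

lemma eval_spherical {p : ℂ × ℂ} (hp : p ∈ sphere) (a b : ℕ) :
    eval (coords p) (spherical a b) = diskPoly p.1 (conj p.1) 1 a b := by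
  rw [spherical, map_diskPoly, eval_radiusSq hp]
  simp [coords]

lemma eval_derivation_spherical_succ_succ {p : ℂ × ℂ} (hp : p ∈ sphere)
    (D : Derivation ℂ SpherePoly SpherePoly) (hD : D radiusSq = 0) (a b : ℕ) :
    eval (coords p) (D (spherical (a + 1) (b + 1))) =
      p.1 * eval (coords p) (D (spherical a (b + 1))) +
        eval (coords p) (spherical a (b + 1)) * eval (coords p) (D (X 0)) +
        (conj p.1 * eval (coords p) (D (spherical (a + 1) b)) +
          eval (coords p) (spherical (a + 1) b) * eval (coords p) (D (X 1))) -
        eval (coords p) (D (spherical a b)) := by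
  simp only [spherical, derivation_diskPoly_succ_succ D hD, map_sub, map_add, map_mul, eval_X,
    eval_radiusSq hp, one_mul]
  simp [coords]

/-- Along a curve on the sphere a spherical function only sees the coordinate `w`, so that the
curve has to follow the vector field in the directions `w` and `conj w` only. -/
lemma hasDerivAt_eval_spherical {γ : ℝ → ℂ × ℂ} {s : ℝ} {w' : ℂ} (hγ : ∀ s, γ s ∈ sphere)
    (D : Derivation ℂ SpherePoly SpherePoly) (hD : D radiusSq = 0)
    (hw : HasDerivAt (fun s => (γ s).1) w' s) (hD₀ : eval (coords (γ s)) (D (X 0)) = w')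
    (hD₁ : eval (coords (γ s)) (D (X 1)) = conj w') (a b : ℕ) :
    HasDerivAt (fun s => eval (coords (γ s)) (spherical a b))
      (eval (coords (γ s)) (D (spherical a b))) s := by
  have hw' := hasDerivAt_conj hw
  have hpow (i : Fin 4) (n : ℕ)
      (hi : HasDerivAt (fun s => coords (γ s) i) (eval (coords (γ s)) (D (X i))) s) :
      HasDerivAt (fun s => eval (coords (γ s)) (X i ^ n))
        (eval (coords (γ s)) (D (X i ^ n))) s := by
    simp only [map_pow, eval_X]
    exact (hi.fun_pow n).congr_deriv (by simp [Derivation.leibniz_pow]; ring)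
  induction a, b using grid_induction with
  | zero_right a => simpa [spherical] using hpow 0 a (hD₀ ▸ hw)
  | zero_left b => simpa [spherical] using hpow 1 b (hD₁ ▸ hw')
  | succ_succ a b h h₁ h₂ =>
    rw [eval_derivation_spherical_succ_succ (hγ s) D hD, hD₀, hD₁]
    simp only [eval_spherical (hγ _), diskPoly_succ_succ, one_mul] at h h₁ h₂ ⊢
    exact (((hw.fun_mul h₁).fun_add (hw'.fun_mul h₂)).fun_sub h).congr_deriv (by ring)

/-- The point of `SU(2)` with cylindrical coordinates `(r, z)`. -/
noncomputable def cylindrical (r z : ℝ) : ℂ × ℂ :=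
  (cos r * Complex.exp (z * Complex.I), sin r * Complex.exp (-z * Complex.I))

lemma cylindrical_mem_sphere (r z : ℝ) : cylindrical r z ∈ sphere := by
  have hunit (z : ℝ) : Complex.normSq (Complex.exp (z * Complex.I)) = 1 := by
    rw [Complex.normSq_eq_norm_sq, Complex.norm_exp_ofReal_mul_I, one_pow]
  have hunit' := hunit (-z)
  push_cast at hunit'
  simp only [sphere, Set.mem_ofPred_eq, cylindrical, map_mul, hunit, hunit', Complex.normSq_ofReal]
  linear_combination cos_sq_add_sin_sq r

lemma conj_exp_mul_I (z : ℝ) :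
    conj (Complex.exp (z * Complex.I)) = Complex.exp (-z * Complex.I) := by
  simp [← Complex.exp_conj]

lemma conj_exp_neg_mul_I (z : ℝ) :
    conj (Complex.exp (-z * Complex.I)) = Complex.exp (z * Complex.I) := by
  rw [← conj_exp_mul_I, Complex.conj_conj]

lemma coords_cylindrical (r z : ℝ) :
    coords (cylindrical r z) = ![cos r * Complex.exp (z * Complex.I),
      cos r * Complex.exp (-z * Complex.I), sin r * Complex.exp (-z * Complex.I),
      sin r * Complex.exp (z * Complex.I)] := by
  simp only [coords, cylindrical, map_mul, Complex.conj_ofReal, conj_exp_mul_I, conj_exp_neg_mul_I]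

lemma hasDerivAt_realEval_cylindrical {r z : ℝ → ℝ} {r' z' s : ℝ} (hr : HasDerivAt r r' s)
    (hz : HasDerivAt z z' s) (a b : ℕ) :
    HasDerivAt (fun s => realEval (cylindrical (r s) (z s)) (spherical a b))
      (-r' * realEval (cylindrical (r s) (z s)) (fieldX (spherical a b)) +
        z' * realEval (cylindrical (r s) (z s)) (fieldZ (spherical a b))) s := by
  have hw : HasDerivAt (fun s => (cylindrical (r s) (z s)).1) _ s :=
    (hr.cos.ofReal_comp).fun_mul ((hz.ofReal_comp.mul_const Complex.I).cexp)
  have heval := hasDerivAt_eval_spherical (fun s => cylindrical_mem_sphere (r s) (z s))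
    (((-r' : ℝ) : ℂ) • fieldX + (z' : ℂ) • fieldZ) (by simp) hw
    (by simp [coords_cylindrical, fieldX, fieldZ, smul_eval, -Complex.coe_smul]; ring)
    (by simp [coords_cylindrical, fieldX, fieldZ, smul_eval, -Complex.coe_smul,
          -Complex.ofReal_cos, -Complex.ofReal_sin, conj_exp_mul_I]; ring) a b
  simp only [realEval_apply]
  refine (hasDerivAt_re heval).congr_deriv ?_
  simp only [Derivation.add_apply, Derivation.smul_apply, map_add, smul_eval, Complex.add_re,
    Complex.re_ofReal_mul]

/-- The vector field `cos r • Y + sin r • Z` kills `w` and `conj w` at the point `(r, z)`. -/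
lemma cos_mul_realEval_fieldY_spherical (r z : ℝ) (a b : ℕ) :
    cos r * realEval (cylindrical r z) (fieldY (spherical a b)) =
      -sin r * realEval (cylindrical r z) (fieldZ (spherical a b)) := by
  have hzero := (hasDerivAt_eval_spherical (γ := fun _ => cylindrical r z) (s := 0)
    (fun _ => cylindrical_mem_sphere r z) ((cos r : ℂ) • fieldY + (sin r : ℂ) • fieldZ)
    (by simp) (hasDerivAt_const 0 _)
    (by simp [coords_cylindrical, fieldY, fieldZ, smul_eval]; ring)
    (by simp [coords_cylindrical, fieldY, fieldZ, smul_eval]; ring) a b).unique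
    (hasDerivAt_const 0 _)
  replace hzero := congrArg Complex.re hzero
  simp only [Derivation.add_apply, Derivation.smul_apply, map_add, smul_eval, Complex.add_re,
    Complex.re_ofReal_mul, Complex.zero_re, ← realEval_apply] at hzero
  linear_combination hzero

/-! ### Convergence of the heat kernel series -/

/-- The Delannoy numbers, obtained from `diskPoly` by making every term of the recursion positive.
They bound the spherical functions on the sphere. -/
noncomputable def delannoy (a b : ℕ) : ℝ := diskPoly 1 1 (-1) a b

@[simp]
lemma delannoy_zero_right (a : ℕ) : delannoy a 0 = 1 := by simp [delannoy]

@[simp]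
lemma delannoy_zero_left (b : ℕ) : delannoy 0 b = 1 := by simp [delannoy]

lemma delannoy_succ_succ (a b : ℕ) :
    delannoy (a + 1) (b + 1) = delannoy a (b + 1) + delannoy (a + 1) b + delannoy a b := by
  simp only [delannoy, diskPoly_succ_succ]
  ring

lemma delannoy_comm (a b : ℕ) : delannoy a b = delannoy b a := diskPoly_comm _ _ _ _ _

lemma delannoy_pos (a b : ℕ) : 0 < delannoy a b := by
  induction a, b using grid_induction with
  | zero_right a => simp
  | zero_left b => simp
  | succ_succ a b h h₁ h₂ => rw [delannoy_succ_succ]; positivity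

lemma delannoy_le_pow (a b : ℕ) : delannoy a b ≤ (1 + 2 * (b : ℝ)) ^ a := by
  induction a, b using grid_induction with
  | zero_right a => simp
  | zero_left b => simp
  | succ_succ a b h h₁ h₂ =>
    have hmono : (1 + 2 * (b : ℝ)) ^ a ≤ (1 + 2 * ((b : ℝ) + 1)) ^ a := by gcongr; linarith
    rw [delannoy_succ_succ]
    push_cast at h₁ ⊢
    rw [pow_succ] at h₂ ⊢
    nlinarith [Nat.cast_nonneg (α := ℝ) b]

lemma delannoy_le_sq_mul_delannoy (a b : ℕ) :
    delannoy a b ≤ 4 * (a + b + 1) ^ 2 * delannoy a b := by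
  refine le_mul_of_one_le_left (delannoy_pos a b).le ?_
  nlinarith [Nat.cast_nonneg (α := ℝ) a, Nat.cast_nonneg (α := ℝ) b]

lemma norm_diskPoly_le_delannoy {R : Type*} [NormedCommRing R] [NormOneClass R] {x y q : R}
    (hx : ‖x‖ ≤ 1) (hy : ‖y‖ ≤ 1) (hq : ‖q‖ ≤ 1) (a b : ℕ) :
    ‖diskPoly x y q a b‖ ≤ delannoy a b := by
  have hmul {u v : R} {c : ℝ} (hu : ‖u‖ ≤ 1) (hv : ‖v‖ ≤ c) : ‖u * v‖ ≤ c :=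
    (norm_mul_le u v).trans ((mul_le_of_le_one_left (norm_nonneg v) hu).trans hv)
  induction a, b using grid_induction with
  | zero_right a => simpa using (norm_pow_le x a).trans (pow_le_one₀ (norm_nonneg x) hx)
  | zero_left b => simpa using (norm_pow_le y b).trans (pow_le_one₀ (norm_nonneg y) hy)
  | succ_succ a b h h₁ h₂ =>
    rw [diskPoly_succ_succ, delannoy_succ_succ]
    exact norm_sub_le_of_le (norm_add_le_of_le (hmul hx h₁) (hmul hy h₂)) (hmul hq h)

lemma norm_coords_le_one {p : ℂ × ℂ} (hp : p ∈ sphere) (i : Fin 4) : ‖coords p i‖ ≤ 1 := by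
  simp only [sphere, Set.mem_ofPred_eq, Complex.normSq_eq_norm_sq] at hp
  have h₁ : ‖p.1‖ ≤ 1 := by nlinarith [norm_nonneg p.1, sq_nonneg ‖p.2‖]
  have h₂ : ‖p.2‖ ≤ 1 := by nlinarith [norm_nonneg p.2, sq_nonneg ‖p.1‖]
  fin_cases i <;> simp [coords, h₁, h₂]

lemma norm_eval_spherical_le {p : ℂ × ℂ} (hp : p ∈ sphere) (a b : ℕ) :
    ‖eval (coords p) (spherical a b)‖ ≤ delannoy a b := by
  rw [eval_spherical hp]
  exact norm_diskPoly_le_delannoy (norm_coords_le_one hp 0) (norm_coords_le_one hp 1) (by simp) a b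

lemma norm_eval_derivation_pow_le {p : ℂ × ℂ} (hp : p ∈ sphere)
    (D : Derivation ℂ SpherePoly SpherePoly) {i : Fin 4} (hi : ‖eval (coords p) (D (X i))‖ ≤ 1)
    (n : ℕ) : ‖eval (coords p) (D (X i ^ n))‖ ≤ n := by
  simp only [Derivation.leibniz_pow, smul_eq_mul, map_mul, map_pow, eval_X, nsmul_eq_mul,
    map_natCast, norm_mul, norm_pow, Complex.norm_natCast]
  exact mul_le_of_le_one_right n.cast_nonneg
    (mul_le_one₀ (pow_le_one₀ (norm_nonneg _) (norm_coords_le_one hp i)) (norm_nonneg _) hi)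

lemma norm_eval_derivation_spherical_le {p : ℂ × ℂ} (hp : p ∈ sphere)
    (D : Derivation ℂ SpherePoly SpherePoly) (hD : D radiusSq = 0)
    (h₀ : ‖eval (coords p) (D (X 0))‖ ≤ 1) (h₁ : ‖eval (coords p) (D (X 1))‖ ≤ 1) (a b : ℕ) :
    ‖eval (coords p) (D (spherical a b))‖ ≤ (a + b) * delannoy a b := by
  have hprod {u v v' w : ℂ} {c d : ℝ} (hu : ‖u‖ ≤ 1) (hw : ‖w‖ ≤ 1) (hv : ‖v‖ ≤ c)
      (hv' : ‖v'‖ ≤ d) : ‖u * v + v' * w‖ ≤ c + d := by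
    refine norm_add_le_of_le ?_ ?_ <;> rw [norm_mul]
    · exact (mul_le_of_le_one_left (norm_nonneg v) hu).trans hv
    · exact (mul_le_of_le_one_right (norm_nonneg v') hw).trans hv'
  induction a, b using grid_induction with
  | zero_right a => simpa [spherical] using norm_eval_derivation_pow_le hp D h₀ a
  | zero_left b => simpa [spherical] using norm_eval_derivation_pow_le hp D h₁ b
  | succ_succ a b ih ih₁ ih₂ =>
    rw [eval_derivation_spherical_succ_succ hp D hD, delannoy_succ_succ]
    refine (norm_sub_le_of_le (norm_add_le_of_le
      (hprod (norm_coords_le_one hp 0) h₀ ih₁ (norm_eval_spherical_le hp a (b + 1)))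
      (hprod (norm_coords_le_one hp 1) h₁ ih₂ (norm_eval_spherical_le hp (a + 1) b))) ih).trans ?_
    push_cast
    linarith [delannoy_pos a b]

/-- For `b ≤ a` the bound `delannoy a b ≤ (1 + 2a)ᵇ` is beaten by `exp (2tab)`, because
`log (1 + 2a) ≤ ta + const` and `b² ≤ ab`. -/
lemma delannoy_le_mul_exp_of_le {t : ℝ} (ht : 0 < t) {a b : ℕ} (hab : b ≤ a) :
    delannoy a b ≤
      exp ((t / 2 + log (2 / t) - 1) ^ 2 / (4 * t)) * exp (2 * t * a * b) := by
  set κ := t / 2 + log (2 / t) - 1 with hκ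
  have hbase : 0 < 1 + 2 * (a : ℝ) := by positivity
  have hlog : log (1 + 2 * (a : ℝ)) ≤ t * a + κ := by
    have htangent := log_le_sub_one_of_pos (x := (1 + 2 * (a : ℝ)) / (2 / t)) (by positivity)
    rw [log_div hbase.ne' (by positivity),
      show (1 + 2 * (a : ℝ)) / (2 / t) = t / 2 + t * a by field_simp] at htangent
    linarith
  have hsquare : b * κ ≤ t * b ^ 2 + κ ^ 2 / (4 * t) := by
    have hnonneg : 0 ≤ (2 * t * b - κ) ^ 2 / (4 * t) := by positivity
    have hexpand : (2 * t * b - κ) ^ 2 / (4 * t) = t * b ^ 2 + κ ^ 2 / (4 * t) - b * κ := by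
      field_simp
      ring
    linarith
  have hab' : t * b * (b : ℝ) ≤ t * b * a := by gcongr
  rw [delannoy_comm]
  refine (delannoy_le_pow b a).trans ?_
  rw [← exp_log hbase, ← exp_nat_mul, ← exp_add]
  refine exp_le_exp.mpr ?_
  linarith [mul_le_mul_of_nonneg_left hlog b.cast_nonneg]

lemma exists_delannoy_le_mul_exp {t : ℝ} (ht : 0 < t) :
    ∃ K > 0, ∀ a b : ℕ, delannoy a b ≤ K * exp (2 * t * a * b) := by
  refine ⟨exp ((t / 2 + log (2 / t) - 1) ^ 2 / (4 * t)), exp_pos _, fun a b => ?_⟩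
  rcases le_total b a with hba | hab
  · exact delannoy_le_mul_exp_of_le ht hba
  · rw [delannoy_comm, mul_right_comm]
    exact delannoy_le_mul_exp_of_le ht hab

/-- The coefficient of `spherical i.1 i.2` in the heat kernel at time `t`: the multiplicity of the
eigenspace times the damping factor. -/
noncomputable def weight (t : ℝ) (i : ℕ × ℕ) : ℝ :=
  (i.1 + i.2 + 1) * exp (-decayRate i.1 i.2 * t)

/-- A bound for the terms of the heat kernel series and of its first derivatives, see
`IsAdmissible`. -/
noncomputable def majorant (t : ℝ) (i : ℕ × ℕ) : ℝ :=
  weight t i * (4 * (i.1 + i.2 + 1) ^ 2 * delannoy i.1 i.2)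

lemma weight_nonneg (t : ℝ) (i : ℕ × ℕ) : 0 ≤ weight t i := by unfold weight; positivity

lemma decayRate_nonneg (a b : ℕ) : 0 ≤ decayRate a b := by unfold decayRate; positivity

lemma decayRate_le (a b : ℕ) : decayRate a b ≤ 4 * (a + b + 1) ^ 2 := by
  unfold decayRate
  nlinarith [Nat.cast_nonneg (α := ℝ) a, Nat.cast_nonneg (α := ℝ) b]

lemma weight_anti {s t : ℝ} (hst : s ≤ t) (i : ℕ × ℕ) : weight t i ≤ weight s i := by
  have hrate := mul_le_mul_of_nonneg_left hst (decayRate_nonneg i.1 i.2)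
  exact mul_le_mul_of_nonneg_left (exp_le_exp.mpr (by linarith)) (by positivity)

lemma exp_mul_exp_neg_decayRate_le {t : ℝ} (ht : 0 < t) (a b : ℕ) :
    exp (2 * t * a * b) * exp (-decayRate a b * t) ≤ exp (-(2 * t) * a) * exp (-(2 * t) * b) := by
  have hnonneg : 0 ≤ t * ((a : ℝ) * b) := by positivity
  rw [← exp_add, ← exp_add, exp_le_exp, decayRate]
  linarith

lemma summable_succ_pow_mul_geometric (k : ℕ) {s : ℝ} (hs₀ : 0 < s) (hs₁ : s < 1) :
    Summable fun n : ℕ => ((n : ℝ) + 1) ^ k * s ^ n := by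
  have hnorm : ‖s‖ < 1 := by rwa [norm_of_nonneg hs₀.le]
  have hpow : Summable fun n : ℕ => (n : ℝ) ^ k * s ^ n :=
    summable_pow_mul_geometric_of_norm_lt_one k hnorm
  refine (((summable_nat_add_iff 1).mpr hpow).mul_left s⁻¹).congr fun n => ?_
  rw [pow_succ', mul_left_comm, inv_mul_cancel_left₀ hs₀.ne', Nat.cast_succ]

lemma summable_succ_pow_mul_exp (k : ℕ) {c : ℝ} (hc : 0 < c) :
    Summable fun n : ℕ => ((n : ℝ) + 1) ^ k * exp (-c * n) := by
  refine (summable_succ_pow_mul_geometric k (exp_pos (-c)) (by simpa using hc)).congr fun n => ?_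
  rw [← exp_nat_mul, mul_comm (n : ℝ)]

lemma summable_majorant {t : ℝ} (ht : 0 < t) : Summable (majorant t) := by
  obtain ⟨K, hK, hdelannoy⟩ := exists_delannoy_le_mul_exp ht
  have hsum := summable_succ_pow_mul_exp 3 (c := 2 * t) (by positivity)
  refine Summable.of_nonneg_of_le (fun i => ?_) (fun i => ?_)
    ((hsum.mul_of_nonneg hsum (fun n => by positivity) fun n => by positivity).mul_left (4 * K))
  · have := delannoy_pos i.1 i.2
    have := weight_nonneg t i
    unfold majorant
    positivity
  obtain ⟨a, b⟩ := i
  have hcube : ((a : ℝ) + b + 1) ^ 3 ≤ (a + 1) ^ 3 * (b + 1) ^ 3 := by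
    rw [← mul_pow]
    gcongr
    nlinarith [mul_nonneg a.cast_nonneg (α := ℝ) b.cast_nonneg]
  calc majorant t (a, b)
      = 4 * (a + b + 1) ^ 3 * delannoy a b * exp (-decayRate a b * t) := by
        simp only [majorant, weight]; ring
    _ ≤ 4 * ((a + 1) ^ 3 * (b + 1) ^ 3) * (K * exp (2 * t * a * b)) *
          exp (-decayRate a b * t) := by
        gcongr
        · exact (delannoy_pos a b).le
        · exact hdelannoy a b
    _ = 4 * K * ((a + 1) ^ 3 * (b + 1) ^ 3) *
          (exp (2 * t * a * b) * exp (-decayRate a b * t)) := by ring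
    _ ≤ 4 * K * ((a + 1) ^ 3 * (b + 1) ^ 3) * (exp (-(2 * t) * a) * exp (-(2 * t) * b)) := by
        exact mul_le_mul_of_nonneg_left (exp_mul_exp_neg_decayRate_le ht a b) (by positivity)
    _ = _ := by ring

/-- An operator that may be applied term by term to the heat kernel: on the sphere it is bounded on
spherical functions as an operator of order at most two. -/
def IsAdmissible (D : Module.End ℂ SpherePoly) : Prop :=
  ∀ p ∈ sphere, ∀ a b : ℕ,
    |realEval p (D (spherical a b))| ≤ 4 * (a + b + 1) ^ 2 * delannoy a b

namespace IsAdmissible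

protected lemma one : IsAdmissible 1 := by
  intro p hp a b
  rw [Module.End.one_apply, realEval_apply]
  exact ((Complex.abs_re_le_norm _).trans (norm_eval_spherical_le hp a b)).trans
    (delannoy_le_sq_mul_delannoy a b)

lemma of_derivation {D : Derivation ℂ SpherePoly SpherePoly} (hD : D radiusSq = 0)
    (h₀ : ∀ p ∈ sphere, ‖eval (coords p) (D (X 0))‖ ≤ 1)
    (h₁ : ∀ p ∈ sphere, ‖eval (coords p) (D (X 1))‖ ≤ 1) : IsAdmissible D.toLinearMap := by
  intro p hp a b
  rw [Derivation.coeFn_coe, realEval_apply]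
  refine ((Complex.abs_re_le_norm _).trans
    (norm_eval_derivation_spherical_le hp D hD (h₀ p hp) (h₁ p hp) a b)).trans ?_
  have := delannoy_pos a b
  gcongr
  nlinarith [Nat.cast_nonneg (α := ℝ) a, Nat.cast_nonneg (α := ℝ) b]

protected lemma fieldX : IsAdmissible fieldX.toLinearMap :=
  of_derivation fieldX_radiusSq
    (fun _ hp => by simpa [SubellipticSU2.fieldX] using norm_coords_le_one hp 3)
    fun _ hp => by simpa [SubellipticSU2.fieldX] using norm_coords_le_one hp 2

protected lemma fieldZ : IsAdmissible fieldZ.toLinearMap :=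
  of_derivation fieldZ_radiusSq
    (fun _ hp => by simpa [SubellipticSU2.fieldZ, smul_eval] using norm_coords_le_one hp 0)
    fun _ hp => by simpa [SubellipticSU2.fieldZ, smul_eval] using norm_coords_le_one hp 1

protected lemma subLaplacian : IsAdmissible subLaplacian := by
  intro p hp a b
  have hbound := (Complex.abs_re_le_norm _).trans (norm_eval_spherical_le hp a b)
  rw [← realEval_apply] at hbound
  rw [subLaplacian_spherical, map_smul, smul_eq_mul, abs_mul, abs_neg,
    abs_of_nonneg (decayRate_nonneg a b)]
  exact mul_le_mul (decayRate_le a b) hbound (abs_nonneg _) (by positivity)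

protected lemma neg {D : Module.End ℂ SpherePoly} (hD : IsAdmissible D) : IsAdmissible (-D) := by
  intro p hp a b
  simpa using hD p hp a b

end IsAdmissible

/-- The term of index `i` of `heatKernel`. -/
noncomputable def heatKernelTerm (D : Module.End ℂ SpherePoly) (t : ℝ) (p : ℂ × ℂ) (i : ℕ × ℕ) :
    ℝ :=
  weight t i * realEval p (D (spherical i.1 i.2))

/-- The operator `D` applied to the heat kernel of `L`, at time `t` and at the point `p`; the
kernel itself is the case `D = 1`. -/
noncomputable def heatKernel (D : Module.End ℂ SpherePoly) (t : ℝ) (p : ℂ × ℂ) : ℝ :=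
  ∑' i, heatKernelTerm D t p i

section HeatKernel

variable {D : Module.End ℂ SpherePoly} {t : ℝ} {p : ℂ × ℂ}

lemma norm_heatKernelTerm_le (hD : IsAdmissible D) {s : ℝ} (hst : s ≤ t) (hp : p ∈ sphere)
    (i : ℕ × ℕ) : ‖heatKernelTerm D t p i‖ ≤ majorant s i := by
  rw [heatKernelTerm, norm_mul, norm_of_nonneg (weight_nonneg t i)]
  exact mul_le_mul (weight_anti hst i) (hD p hp i.1 i.2) (abs_nonneg _) (weight_nonneg s i)

lemma summable_heatKernelTerm (hD : IsAdmissible D) (ht : 0 < t) (hp : p ∈ sphere) :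
    Summable (heatKernelTerm D t p) :=
  (summable_majorant ht).of_norm_bounded (norm_heatKernelTerm_le hD le_rfl hp)

lemma heatKernel_neg : heatKernel (-D) t p = -heatKernel D t p := by
  simp [heatKernel, heatKernelTerm, tsum_neg]

lemma hasDerivAt_heatKernel_comp {γ : ℝ → ℂ × ℂ} (hγ : ∀ s, γ s ∈ sphere) (hD : IsAdmissible D)
    (hderiv : ∀ a b s, HasDerivAt (fun s => realEval (γ s) (spherical a b))
      (realEval (γ s) (D (spherical a b))) s) (ht : 0 < t) (s : ℝ) :
    HasDerivAt (fun s => heatKernel 1 t (γ s)) (heatKernel D t (γ s)) s :=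
  hasDerivAt_tsum (g := fun i s => heatKernelTerm 1 t (γ s) i) (summable_majorant ht)
    (fun i s => (hderiv i.1 i.2 s).const_mul (weight t i))
    (fun i s => norm_heatKernelTerm_le hD le_rfl (hγ s) i)
    (summable_heatKernelTerm .one ht (hγ s)) s

lemma hasDerivAt_heatKernel_radial (ht : 0 < t) (r z : ℝ) :
    HasDerivAt (fun r => heatKernel 1 t (cylindrical r z))
      (-heatKernel fieldX.toLinearMap t (cylindrical r z)) r := by
  rw [← heatKernel_neg]
  refine hasDerivAt_heatKernel_comp (fun r => cylindrical_mem_sphere r z) IsAdmissible.fieldX.neg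
    (fun a b r => ?_) ht r
  simpa using hasDerivAt_realEval_cylindrical (hasDerivAt_id r) (hasDerivAt_const r z) a b

lemma hasDerivAt_heatKernel_angular (ht : 0 < t) (r z : ℝ) :
    HasDerivAt (fun z => heatKernel 1 t (cylindrical r z))
      (heatKernel fieldZ.toLinearMap t (cylindrical r z)) z := by
  refine hasDerivAt_heatKernel_comp (fun z => cylindrical_mem_sphere r z) IsAdmissible.fieldZ
    (fun a b z => ?_) ht z
  simpa using hasDerivAt_realEval_cylindrical (hasDerivAt_const z r) (hasDerivAt_id z) a b

lemma hasDerivAt_heatKernelTerm (i : ℕ × ℕ) :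
    HasDerivAt (fun t => heatKernelTerm 1 t p i) (heatKernelTerm subLaplacian t p i) t := by
  have hexp : HasDerivAt (fun t => exp (-decayRate i.1 i.2 * t))
      (exp (-decayRate i.1 i.2 * t) * -decayRate i.1 i.2) t := by
    simpa using ((hasDerivAt_id t).const_mul (-decayRate i.1 i.2)).exp
  refine ((hexp.const_mul (i.1 + i.2 + 1 : ℝ)).mul_const _).congr_deriv ?_
  rw [heatKernelTerm, weight, subLaplacian_spherical, map_smul, smul_eq_mul,
    Module.End.one_apply]
  ring

lemma hasDerivAt_heatKernel_time (ht : 0 < t) (hp : p ∈ sphere) :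
    HasDerivAt (fun t => heatKernel 1 t p) (heatKernel subLaplacian t p) t :=
  hasDerivAt_tsum_of_isPreconnected (g := fun i t => heatKernelTerm 1 t p i)
    (summable_majorant (half_pos ht)) isOpen_Ioi isPreconnected_Ioi
    (fun i _ _ => hasDerivAt_heatKernelTerm i)
    (fun i _ hτ => norm_heatKernelTerm_le .subLaplacian (le_of_lt hτ) hp i)
    (half_lt_self ht) (summable_heatKernelTerm .one ht hp) (half_lt_self ht)

end HeatKernel

/-! ### Comparison with the Jacobi polynomial series -/

/-- The term of index `j` in the expansion of `diskPoly x y q a b` in powers of `x * y - q`. -/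
def diskPolyTerm {R : Type*} [CommRing R] (x y q : R) (a b j : ℕ) : R :=
  a.choose j * b.choose j * (x * y - q) ^ j * x ^ (a - j) * y ^ (b - j)

section DiskPolyExpansion

variable {R : Type*} [CommRing R] (x y q : R)

lemma mul_choose_mul_pow (n j : ℕ) :
    x * (n.choose j * x ^ (n - j)) = n.choose j * x ^ (n + 1 - j) := by
  rcases le_or_gt j n with hjn | hjn
  · rw [Nat.sub_add_comm hjn, pow_succ]; ring
  · simp [Nat.choose_eq_zero_of_lt hjn]

@[simp]
lemma diskPolyTerm_zero (a b : ℕ) : diskPolyTerm x y q a b 0 = x ^ a * y ^ b := by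
  simp [diskPolyTerm]

lemma diskPolyTerm_succ_succ_succ (a b j : ℕ) :
    diskPolyTerm x y q (a + 1) (b + 1) (j + 1) =
      x * diskPolyTerm x y q a (b + 1) (j + 1) + y * diskPolyTerm x y q (a + 1) b (j + 1) -
        x * y * diskPolyTerm x y q a b (j + 1) + (x * y - q) * diskPolyTerm x y q a b j := by
  have hx := mul_choose_mul_pow x a (j + 1)
  have hy := mul_choose_mul_pow y b (j + 1)
  have hchoose (n : ℕ) : ((n + 1).choose (j + 1) : R) = n.choose j + n.choose (j + 1) := by
    rw [Nat.choose_succ_succ', Nat.cast_add]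
  simp only [diskPolyTerm, hchoose, Nat.add_sub_add_right, pow_succ (x * y - q) j] at hx hy ⊢
  set U := (x * y - q) ^ j * (x * y - q)
  linear_combination
    (y * y ^ (b - (j + 1)) * b.choose (j + 1) -
        (b.choose j + b.choose (j + 1)) * y ^ (b - j)) * U * hx -
      a.choose j * x ^ (a - j) * U * hy

lemma diskPoly_eq_sum {a b K : ℕ} (hK : a < K) :
    diskPoly x y q a b = ∑ j ∈ Finset.range K, diskPolyTerm x y q a b j := by
  induction a, b using grid_induction generalizing K with
  | zero_right a =>
    rw [Finset.sum_eq_single_of_mem 0 (by simpa using by omega)] <;>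
      simp +contextual [diskPolyTerm, Nat.choose_eq_zero_of_lt, Nat.pos_iff_ne_zero]
  | zero_left b =>
    rw [Finset.sum_eq_single_of_mem 0 (by simpa using hK)] <;>
      simp +contextual [diskPolyTerm, Nat.choose_eq_zero_of_lt, Nat.pos_iff_ne_zero]
  | succ_succ a b h h₁ h₂ =>
    obtain ⟨K, rfl⟩ : ∃ K', K = K' + 1 := ⟨K - 1, by omega⟩
    have hsplit : q * diskPoly x y q a b = x * y * diskPoly x y q a b -
        (x * y - q) * diskPoly x y q a b := by ring
    rw [diskPoly_succ_succ, hsplit, h₁ (K := K + 1) (by omega), h₂ hK]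
    nth_rw 1 [h (K := K + 1) (by omega)]
    rw [h (K := K) (by omega)]
    simp only [Finset.sum_range_succ', diskPolyTerm_succ_succ_succ, Finset.sum_add_distrib,
      Finset.sum_sub_distrib, ← Finset.mul_sum, diskPolyTerm_zero]
    ring

lemma diskPoly_mul_mul (u v : R) (a b : ℕ) :
    diskPoly (x * u) (y * v) (q * (u * v)) a b = u ^ a * v ^ b * diskPoly x y q a b := by
  induction a, b using grid_induction with
  | zero_right a => simp [mul_pow, mul_comm]
  | zero_left b => simp [mul_pow, mul_comm]
  | succ_succ a b h h₁ h₂ => rw [diskPoly_succ_succ, diskPoly_succ_succ, h, h₁, h₂]; ring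

end DiskPolyExpansion

lemma iteratedDeriv_rodrigues (k m : ℕ) (x : ℝ) :
    iteratedDeriv k (fun y : ℝ => (1 + y) ^ m * (1 - y ^ 2) ^ k) x =
      ∑ i ∈ Finset.range (k + 1), k.choose i *
        ((m + k).descFactorial i * (1 + x) ^ (m + k - i)) *
        ((-1) ^ (k - i) * (k.descFactorial (k - i) * (1 - x) ^ (k - (k - i)))) := by
  have hfactor : (fun y : ℝ => (1 + y) ^ m * (1 - y ^ 2) ^ k) =
      fun y => (1 + y) ^ (m + k) * (1 - y) ^ k := by
    ext y
    rw [show 1 - y ^ 2 = (1 + y) * (1 - y) by ring, mul_pow, pow_add]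
    ring
  have hleft (i : ℕ) : iteratedDeriv i (fun y : ℝ => (1 + y) ^ (m + k)) x =
      (m + k).descFactorial i * (1 + x) ^ (m + k - i) :=
    (congrFun (iteratedDeriv_comp_const_add i (fun y : ℝ => y ^ (m + k)) 1) x).trans
      (iteratedDeriv_pow _ _)
  have hright (i : ℕ) : iteratedDeriv i (fun y : ℝ => (1 - y) ^ k) x =
      (-1) ^ i * (k.descFactorial i * (1 - x) ^ (k - i)) := by
    refine (congrFun (iteratedDeriv_comp_const_sub i (fun y : ℝ => y ^ k) 1) x).trans ?_
    simp only [iteratedDeriv_pow, smul_eq_mul]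
  rw [hfactor, iteratedDeriv_fun_mul (by fun_prop) (by fun_prop)]
  simp only [hleft, hright]

lemma jacobiP_eq_sum (k m : ℕ) {x : ℝ} (hx : 1 + x ≠ 0) :
    jacobiP k m x = ∑ i ∈ Finset.range (k + 1), (k.choose i : ℝ) * (k + m).choose i * (-1) ^ i *
      ((1 + x) / 2) ^ (k - i) * ((1 - x) / 2) ^ i := by
  rw [jacobiP, iteratedDeriv_rodrigues, Finset.mul_sum]
  refine Finset.sum_congr rfl fun i hi => ?_
  obtain ⟨j, rfl⟩ := Nat.exists_eq_add_of_le (Finset.mem_range_succ_iff.mp hi)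
  have hdesc : ((m + (i + j)).descFactorial i : ℝ) = i.factorial * (i + j + m).choose i := by
    rw [add_comm m]
    exact_mod_cast Nat.descFactorial_eq_factorial_mul_choose _ _
  have hfactorial : (i.factorial : ℝ) * (i + j).descFactorial j = (i + j).factorial := by
    simpa using congrArg (Nat.cast (R := ℝ))
      (Nat.factorial_mul_descFactorial (n := i + j) (k := j) (by omega))
  have hne : ((i + j).descFactorial j : ℝ) ≠ 0 := by
    rw [Nat.cast_ne_zero, Ne, Nat.descFactorial_eq_zero_iff_lt]
    omega
  have hsign : ((-1 : ℝ) ^ j) ^ 2 = 1 := by rw [← pow_mul, mul_comm, pow_mul]; norm_num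
  rw [← hfactorial, hdesc, show i + j - i = j by omega, show m + (i + j) - i = m + j by omega,
    show i + j - j = i by omega, div_pow, div_pow, pow_add (-1 : ℝ), pow_add (1 + x) m j,
    pow_add (2 : ℝ) i j]
  field_simp
  linear_combination ((i + j).choose i : ℝ) * (i + j + m).choose i * (1 - x) ^ i * hsign

lemma cos_pow_mul_jacobiP {r : ℝ} (hr : cos r ≠ 0) (k m : ℕ) :
    cos r ^ m * jacobiP k m (cos (2 * r)) = diskPoly (cos r) (cos r) 1 k (k + m) := by
  have hadd : 1 + cos (2 * r) = 2 * cos r ^ 2 := by rw [cos_two_mul]; ring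
  have hsub : (1 - cos (2 * r)) / 2 = -(cos r * cos r - 1) := by rw [cos_two_mul]; ring
  rw [jacobiP_eq_sum k m (by rw [hadd]; positivity), diskPoly_eq_sum _ _ _ k.lt_succ_self, hsub,
    hadd, mul_div_cancel_left₀ _ two_ne_zero, Finset.mul_sum]
  refine Finset.sum_congr rfl fun j hj => ?_
  obtain ⟨l, rfl⟩ := Nat.exists_eq_add_of_le (Finset.mem_range_succ_iff.mp hj)
  have hsign : (-1 : ℝ) ^ j * (-1) ^ j = 1 := by rw [← mul_pow]; norm_num
  rw [diskPolyTerm, show j + l - j = l by omega, show j + l + m - j = l + m by omega,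
    neg_pow (cos r * cos r - 1)]
  linear_combination (j + l).choose j * (j + l + m).choose j * (cos r * cos r - 1) ^ j *
    cos r ^ (l + l + m) * hsign

lemma eval_spherical_cylindrical (r z : ℝ) (a b : ℕ) :
    eval (coords (cylindrical r z)) (spherical a b) =
      (diskPoly (cos r) (cos r) 1 a b : ℝ) * Complex.exp ((a - b) * z * Complex.I) := by
  have hunit : Complex.exp (z * Complex.I) * Complex.exp (-z * Complex.I) = 1 := by
    rw [← Complex.exp_add]; simp
  have hscale := diskPoly_mul_mul (cos r : ℂ) (cos r) 1 (Complex.exp (z * Complex.I))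
    (Complex.exp (-z * Complex.I)) a b
  have hcast : ((diskPoly (cos r) (cos r) 1 a b : ℝ) : ℂ) = diskPoly (cos r : ℂ) (cos r) 1 a b :=
    (map_diskPoly _ _ _ Complex.ofRealHom a b).trans
      (by simp only [Complex.ofRealHom_eq_coe, Complex.ofReal_one])
  rw [hunit, mul_one] at hscale
  rw [eval_spherical (cylindrical_mem_sphere r z), cylindrical, map_mul, Complex.conj_ofReal,
    conj_exp_mul_I, hscale, ← Complex.exp_nat_mul, ← Complex.exp_nat_mul, ← Complex.exp_add,
    hcast, mul_comm]
  congr 2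
  ring

/-- The heat kernel series is summed over `n ∈ ℤ` and `k ∈ ℕ`, the spherical functions are indexed
by their bidegree `(a, b)`: here `n = a - b` and `k = min a b`. -/
def bidegreeEquiv : ℤ × ℕ ≃ ℕ × ℕ where
  toFun q := (q.2 + q.1.toNat, q.2 + (-q.1).toNat)
  invFun i := ((i.1 : ℤ) - i.2, min i.1 i.2)
  left_inv := by
    rintro ⟨n, k⟩
    simp only [Prod.mk.injEq]
    constructor <;> omega
  right_inv := by
    rintro ⟨a, b⟩
    simp only [Prod.mk.injEq]
    constructor <;> omega

/-- The complex form of `heatKernelTerm 1`. -/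
noncomputable def complexTerm (t : ℝ) (p : ℂ × ℂ) (i : ℕ × ℕ) : ℂ :=
  weight t i * eval (coords p) (spherical i.1 i.2)

lemma re_complexTerm (t : ℝ) (p : ℂ × ℂ) (i : ℕ × ℕ) :
    (complexTerm t p i).re = heatKernelTerm 1 t p i := by
  rw [complexTerm, Complex.re_ofReal_mul, heatKernelTerm, Module.End.one_apply, realEval_apply]

lemma heatTerm_eq_complexTerm (t z : ℝ) {r : ℝ} (hr : cos r ≠ 0) (n : ℤ) (k : ℕ) :
    heatTerm t r z n k = complexTerm t (cylindrical r z) (bidegreeEquiv (n, k)) := by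
  obtain ⟨m, rfl | rfl⟩ := n.eq_nat_or_neg
  · have hindex : bidegreeEquiv ((m : ℤ), k) = (k + m, k) := by simp [bidegreeEquiv]
    rw [hindex, heatTerm, complexTerm, eval_spherical_cylindrical, diskPoly_comm,
      ← cos_pow_mul_jacobiP hr, weight, decayRate, Int.natAbs_natCast]
    push_cast
    ring_nf
  · have hindex : bidegreeEquiv (-(m : ℤ), k) = (k, k + m) := by simp [bidegreeEquiv]
    rw [hindex, heatTerm, complexTerm, eval_spherical_cylindrical, ← cos_pow_mul_jacobiP hr,
      weight, decayRate, Int.natAbs_neg, Int.natAbs_natCast]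
    push_cast
    ring_nf

lemma summable_complexTerm {t : ℝ} (ht : 0 < t) {p : ℂ × ℂ} (hp : p ∈ sphere) :
    Summable (complexTerm t p) := by
  refine (summable_majorant ht).of_norm_bounded fun i => ?_
  rw [complexTerm, norm_mul, Complex.norm_real, norm_of_nonneg (weight_nonneg t i)]
  exact mul_le_mul_of_nonneg_left
    ((norm_eval_spherical_le hp i.1 i.2).trans (delannoy_le_sq_mul_delannoy i.1 i.2))
    (weight_nonneg t i)

theorem heatP_eq_heatKernel {t : ℝ} (ht : 0 < t) {r : ℝ} (hr : cos r ≠ 0) (z : ℝ) :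
    heatP t r z = heatKernel 1 t (cylindrical r z) := by
  have hsum := summable_complexTerm ht (cylindrical_mem_sphere r z)
  have hsum' : Summable fun q => complexTerm t (cylindrical r z) (bidegreeEquiv q) :=
    bidegreeEquiv.summable_iff.mpr hsum
  have hseries : ∑' n : ℤ, ∑' k : ℕ, heatTerm t r z n k =
      ∑' i, complexTerm t (cylindrical r z) i := by
    rw [← bidegreeEquiv.tsum_eq, hsum'.tsum_prod]
    exact tsum_congr fun n => tsum_congr fun k => heatTerm_eq_complexTerm t z hr n k
  rw [heatP, hseries, Complex.re_tsum hsum]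
  exact tsum_congr (re_complexTerm t _)

/-! ### Approximation by positive heat flows -/

section ChebyshevU

open Polynomial.Chebyshev

lemma abs_eval_U_le {x : ℝ} (hx : |x| ≤ 1) (n : ℕ) :
    |(U ℝ n).eval x| ≤ n + 1 := by
  induction n with
  | zero => simp
  | succ n ih =>
    have hT := abs_eval_T_real_le_one (n + 1) hx
    have hstep : (U ℝ (n + 1 : ℕ)).eval x = x * (U ℝ n).eval x + (T ℝ (n + 1)).eval x := by
      simpa using congrArg (Polynomial.eval x) (U_eq_X_mul_U_add_T ℝ n)
    have hmul : |x * (U ℝ n).eval x| ≤ n + 1 := by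
      rw [abs_mul]
      exact (mul_le_of_le_one_left (abs_nonneg _) hx).trans ih
    rw [hstep]
    push_cast
    exact (abs_add_le _ _).trans (add_le_add hmul hT)

lemma eval_U_add_two (x : ℝ) (n : ℕ) :
    (U ℝ (n + 2 : ℕ)).eval x = 2 * x * (U ℝ (n + 1 : ℕ)).eval x - (U ℝ n).eval x := by
  simp [U_add_two]

variable {x s : ℝ}

lemma norm_succ_mul_pow_mul_eval_U_le (hx : |x| ≤ 1) (hs : 0 < s) (n : ℕ) :
    ‖((n : ℝ) + 1) * s ^ n * (U ℝ n).eval x‖ ≤ ((n : ℝ) + 1) ^ 2 * s ^ n := by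
  rw [norm_mul, norm_of_nonneg (by positivity), sq, mul_right_comm _ _ (s ^ n)]
  exact mul_le_mul_of_nonneg_left (abs_eval_U_le hx n) (by positivity)

lemma summable_succ_mul_pow_mul_eval_U (hx : |x| ≤ 1) (hs₀ : 0 < s) (hs₁ : s < 1) :
    Summable fun n : ℕ => ((n : ℝ) + 1) * s ^ n * (U ℝ n).eval x :=
  (summable_succ_pow_mul_geometric 2 hs₀ hs₁).of_norm_bounded
    (norm_succ_mul_pow_mul_eval_U_le hx hs₀)

lemma summable_pow_mul_eval_U (hx : |x| ≤ 1) (hs₀ : 0 < s) (hs₁ : s < 1) :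
    Summable fun n : ℕ => s ^ n * (U ℝ n).eval x := by
  refine (summable_succ_mul_pow_mul_eval_U hx hs₀ hs₁).norm.of_norm_bounded fun n => ?_
  rw [mul_assoc, norm_mul ((n : ℝ) + 1), norm_of_nonneg (by positivity : (0 : ℝ) ≤ n + 1)]
  exact le_mul_of_one_le_left (norm_nonneg _) (by linarith [Nat.cast_nonneg (α := ℝ) n])

lemma mul_tsum_pow_mul_eval_U (hx : |x| ≤ 1) (hs₀ : 0 < s) (hs₁ : s < 1) :
    (1 - 2 * s * x + s ^ 2) * ∑' n : ℕ, s ^ n * (U ℝ n).eval x = 1 := by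
  have h₀ := (summable_pow_mul_eval_U hx hs₀ hs₁).hasSum
  have h₁ := (hasSum_nat_add_iff' 1).mpr h₀
  have h₂ := (hasSum_nat_add_iff' 2).mpr h₀
  have hrec := h₂.unique (((h₁.mul_left (2 * x * s)).sub (h₀.mul_left (s ^ 2))).congr_fun
    fun n => by rw [eval_U_add_two]; ring)
  simp only [Finset.sum_range_succ, Finset.range_one, Finset.sum_singleton, pow_zero,
    Nat.cast_zero, U_zero, Polynomial.eval_one, mul_one, pow_one, Nat.cast_one, U_one,
    Polynomial.eval_mul, Polynomial.eval_ofNat, Polynomial.eval_X] at hrec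
  linear_combination hrec

lemma mul_tsum_succ_mul_pow_mul_eval_U (hx : |x| ≤ 1) (hs₀ : 0 < s) (hs₁ : s < 1) :
    (1 - 2 * s * x + s ^ 2) ^ 2 * ∑' n : ℕ, ((n : ℝ) + 1) * s ^ n * (U ℝ n).eval x =
      1 - s ^ 2 := by
  have hgen := mul_tsum_pow_mul_eval_U hx hs₀ hs₁
  have a₀ := (summable_pow_mul_eval_U hx hs₀ hs₁).hasSum
  have a₁ := (hasSum_nat_add_iff' 1).mpr a₀
  have b₀ := (summable_succ_mul_pow_mul_eval_U hx hs₀ hs₁).hasSum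
  have b₁ := (hasSum_nat_add_iff' 1).mpr b₀
  have b₂ := (hasSum_nat_add_iff' 2).mpr b₀
  have hrec := b₂.unique ((((b₁.add a₁).mul_left (2 * x * s)).sub
    ((b₀.add (a₀.mul_left 2)).mul_left (s ^ 2))).congr_fun
      fun n => by rw [eval_U_add_two]; push_cast; ring)
  simp only [Finset.sum_range_succ, Finset.range_one, Finset.sum_singleton, Nat.cast_zero,
    zero_add, pow_zero, mul_one, U_zero, Polynomial.eval_one, Nat.cast_one, pow_one, U_one,
    Polynomial.eval_mul, Polynomial.eval_ofNat, Polynomial.eval_X] at hrec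
  linear_combination (1 - 2 * s * x + s ^ 2) * hrec + (2 * s * x - 2 * s ^ 2) * hgen

lemma div_le_tsum_succ_mul_pow_mul_eval_U (hx : |x| ≤ 1) (hs₀ : 0 < s) (hs₁ : s < 1) :
    (1 - s ^ 2) / 16 ≤ ∑' n : ℕ, ((n : ℝ) + 1) * s ^ n * (U ℝ n).eval x := by
  obtain ⟨hx₀, hx₁⟩ := abs_le.mp hx
  have hpos : 0 < 1 - 2 * s * x + s ^ 2 := by nlinarith [sq_pos_of_pos (sub_pos.mpr hs₁)]
  have hle : 1 - 2 * s * x + s ^ 2 ≤ 4 := by nlinarith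
  rw [← mul_tsum_succ_mul_pow_mul_eval_U hx hs₀ hs₁, mul_div_right_comm]
  refine mul_le_of_le_one_left (le_of_mul_le_mul_left (a := (1 - 2 * s * x + s ^ 2) ^ 2) ?_
    (by positivity)) ?_
  · rw [mul_tsum_succ_mul_pow_mul_eval_U hx hs₀ hs₁]
    nlinarith
  · rw [div_le_one (by norm_num)]
    nlinarith

end ChebyshevU

open Finset.HasAntidiagonal (antidiagonal mem_antidiagonal)

lemma sum_antidiagonal_diskPoly_add_two {R : Type*} [CommRing R] (x y q : R) (n : ℕ) :
    ∑ i ∈ antidiagonal (n + 2), diskPoly x y q i.1 i.2 =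
      (x + y) * ∑ i ∈ antidiagonal (n + 1), diskPoly x y q i.1 i.2 -
        q * ∑ i ∈ antidiagonal n, diskPoly x y q i.1 i.2 := by
  have hleft := Finset.Nat.sum_antidiagonal_succ (f := fun i => diskPoly x y q i.1 i.2) (n := n)
  have hright := Finset.Nat.sum_antidiagonal_succ' (f := fun i => diskPoly x y q i.1 i.2) (n := n)
  rw [Finset.Nat.sum_antidiagonal_succ, Finset.Nat.sum_antidiagonal_succ']
  simp only [diskPoly_succ_succ, diskPoly_zero_left, diskPoly_zero_right, Finset.sum_sub_distrib,
    Finset.sum_add_distrib, ← Finset.mul_sum] at hleft hright ⊢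
  linear_combination (-y) * hleft - x * hright

lemma sum_antidiagonal_diskPoly_eq_eval_U {w : ℂ} (n : ℕ) :
    ∑ i ∈ antidiagonal n, diskPoly w (conj w) 1 i.1 i.2 =
      (((Polynomial.Chebyshev.U ℝ n).eval w.re : ℝ) : ℂ) := by
  induction n using Nat.twoStepInduction with
  | zero => simp
  | one => simp [Finset.Nat.antidiagonal_succ, add_comm, Complex.add_conj]
  | more n h₀ h₁ =>
    rw [sum_antidiagonal_diskPoly_add_two, h₀, h₁, eval_U_add_two, Complex.add_conj]
    push_cast
    ring

lemma sum_antidiagonal_realEval_spherical {p : ℂ × ℂ} (hp : p ∈ sphere) (n : ℕ) :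
    ∑ i ∈ antidiagonal n, realEval p (spherical i.1 i.2) =
      (Polynomial.Chebyshev.U ℝ n).eval p.1.re := by
  simp only [realEval_apply, eval_spherical hp, ← Complex.re_sum,
    sum_antidiagonal_diskPoly_eq_eval_U, Complex.ofReal_re]

/-- The coefficients of the Poisson kernel `(1 - s²) / (1 - 2sx + s²)²` of the unit ball of `ℂ²`,
where `x` is the real part of the first coordinate: a positive approximation of the Dirac mass at
the identity. -/
noncomputable def poissonCoeff (s : ℝ) (i : ℕ × ℕ) : ℝ := (i.1 + i.2 + 1) * s ^ (i.1 + i.2)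

/-- The bidegrees of total degree less than `n`. -/
def degreeLT (n : ℕ) : Finset (ℕ × ℕ) := (Finset.range n).biUnion antidiagonal

lemma mem_degreeLT {n : ℕ} {i : ℕ × ℕ} : i ∈ degreeLT n ↔ i.1 + i.2 < n := by
  simp [degreeLT]

lemma sum_degreeLT (n : ℕ) (f : ℕ × ℕ → ℝ) :
    ∑ i ∈ degreeLT n, f i = ∑ k ∈ Finset.range n, ∑ i ∈ antidiagonal k, f i :=
  Finset.sum_biUnion fun _ _ _ _ hkl =>
    Finset.disjoint_left.mpr fun _ hk hl =>
      hkl ((mem_antidiagonal.mp hk).symm.trans (mem_antidiagonal.mp hl))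

lemma realEval_heatFlow_poissonCoeff_zero (s : ℝ) {p : ℂ × ℂ} (hp : p ∈ sphere) (n : ℕ) :
    realEval p (heatFlow (degreeLT n) (poissonCoeff s) 0) =
      ∑ k ∈ Finset.range n, ((k : ℝ) + 1) * s ^ k *
        (Polynomial.Chebyshev.U ℝ k).eval p.1.re := by
  have hflow := realEval_map_heatFlow (s := degreeLT n) (c := poissonCoeff s) 1 p 0
  rw [Module.End.one_apply] at hflow
  rw [hflow, sum_degreeLT]
  refine Finset.sum_congr rfl fun k _ => ?_
  rw [← sum_antidiagonal_realEval_spherical hp, Finset.mul_sum]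
  refine Finset.sum_congr rfl fun i hi => ?_
  simp [poissonCoeff, ← mem_antidiagonal.mp hi]

/-- The Poisson kernel is at least `(1 - s²) / 16` on the sphere, which absorbs the tail of its
series, uniformly in `p`. -/
lemma eventually_realEval_heatFlow_poissonCoeff_pos {s : ℝ} (hs₀ : 0 < s) (hs₁ : s < 1) :
    ∀ᶠ n in atTop, ∀ p ∈ sphere,
      0 < realEval p (heatFlow (degreeLT n) (poissonCoeff s) 0) := by
  have hmajorant := summable_succ_pow_mul_geometric 2 hs₀ hs₁
  have hpos : 0 < (1 - s ^ 2) / 16 := by nlinarith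
  filter_upwards [(tendsto_sum_nat_add fun k : ℕ => ((k : ℝ) + 1) ^ 2 * s ^ k).eventually
    (gt_mem_nhds hpos)] with n hn p hp
  have hx : |p.1.re| ≤ 1 := (Complex.abs_re_le_norm _).trans (norm_coords_le_one hp 0)
  have hsum := summable_succ_mul_pow_mul_eval_U hx hs₀ hs₁
  have htail : ∑' k : ℕ, (((k + n : ℕ) : ℝ) + 1) * s ^ (k + n) *
      (Polynomial.Chebyshev.U ℝ (k + n : ℕ)).eval p.1.re ≤
        ∑' k : ℕ, (((k + n : ℕ) : ℝ) + 1) ^ 2 * s ^ (k + n) :=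
    Summable.tsum_le_tsum
      (fun k => (le_abs_self _).trans (norm_succ_mul_pow_mul_eval_U_le hx hs₀ (k + n)))
      ((summable_nat_add_iff n).mpr hsum) ((summable_nat_add_iff n).mpr hmajorant)
  rw [realEval_heatFlow_poissonCoeff_zero s hp]
  linarith [hsum.sum_add_tsum_nat_add n, div_le_tsum_succ_mul_pow_mul_eval_U hx hs₀ hs₁]

lemma realEval_map_heatFlow_poissonCoeff (D : Module.End ℂ SpherePoly) (F : Finset (ℕ × ℕ))
    (s t : ℝ) (p : ℂ × ℂ) :
    realEval p (D (heatFlow F (poissonCoeff s) t)) =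
      ∑' i, (F : Set (ℕ × ℕ)).indicator (fun i => s ^ (i.1 + i.2) * heatKernelTerm D t p i) i := by
  rw [realEval_map_heatFlow, ← sum_eq_tsum_indicator]
  refine Finset.sum_congr rfl fun i _ => ?_
  rw [poissonCoeff, heatKernelTerm, weight]
  ring

lemma tendsto_realEval_map_heatFlow_poissonCoeff {F : ℕ → Finset (ℕ × ℕ)} {s : ℕ → ℝ}
    (hF : ∀ i, ∀ᶠ j in atTop, i ∈ F j) (hs : Tendsto s atTop (𝓝 1))
    (hs₀ : ∀ j, 0 < s j) (hs₁ : ∀ j, s j < 1) {D : Module.End ℂ SpherePoly}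
    (hD : IsAdmissible D) {t : ℝ} (ht : 0 < t) {p : ℂ × ℂ} (hp : p ∈ sphere) :
    Tendsto (fun j => realEval p (D (heatFlow (F j) (poissonCoeff (s j)) t)))
      atTop (𝓝 (heatKernel D t p)) := by
  simp only [realEval_map_heatFlow_poissonCoeff]
  refine tendsto_tsum_of_dominated_convergence (summable_majorant ht) (fun i => ?_)
    (.of_forall fun j i => ?_)
  · have hterm : Tendsto (fun j => s j ^ (i.1 + i.2) * heatKernelTerm D t p i)
        atTop (𝓝 (heatKernelTerm D t p i)) := by
      simpa using (hs.pow (i.1 + i.2)).mul_const (heatKernelTerm D t p i)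
    refine hterm.congr' ?_
    filter_upwards [hF i] with j hj
    rw [Set.indicator_of_mem (Finset.mem_coe.mpr hj)]
  · refine (norm_indicator_le_norm_self _ _).trans ?_
    rw [norm_mul, norm_of_nonneg (pow_nonneg (hs₀ j).le _)]
    exact (mul_le_of_le_one_left (norm_nonneg _) (pow_le_one₀ (hs₀ j).le (hs₁ j).le)).trans
      (norm_heatKernelTerm_le hD le_rfl hp i)

/-- A sequence of finite heat flows with positive initial data which converges to the heat kernel
together with the derivatives that enter the Li–Yau inequality. -/
structure PositiveApproximation where
  support : ℕ → Finset (ℕ × ℕ)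
  coeff : ℕ → ℕ × ℕ → ℝ
  pos : ∀ j, ∀ p ∈ sphere, 0 < realEval p (heatFlow (support j) (coeff j) 0)
  tendsto : ∀ {D : Module.End ℂ SpherePoly}, IsAdmissible D → ∀ {t : ℝ}, 0 < t →
    ∀ {p : ℂ × ℂ}, p ∈ sphere → Tendsto
      (fun j => realEval p (D (heatFlow (support j) (coeff j) t))) atTop
      (𝓝 (heatKernel D t p))

theorem nonempty_positiveApproximation : Nonempty PositiveApproximation := by
  obtain ⟨s, -, hs, hlim⟩ := exists_seq_strictMono_tendsto' (zero_lt_one (α := ℝ))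
  have hs₀ := fun j => (hs j).1
  have hs₁ := fun j => (hs j).2
  choose n hpos hn using fun j =>
    ((eventually_realEval_heatFlow_poissonCoeff_pos (hs₀ j) (hs₁ j)).and
      (eventually_gt_atTop j)).exists
  refine ⟨⟨fun j => degreeLT (n j), fun j => poissonCoeff (s j), hpos,
    tendsto_realEval_map_heatFlow_poissonCoeff (fun i => ?_) hlim hs₀ hs₁⟩⟩
  filter_upwards [eventually_ge_atTop (i.1 + i.2)] with j hj
  exact mem_degreeLT.mpr (hj.trans_lt (hn j))

/-! ### Harnack inequality and positivity -/

lemma le_exp_mul_of_neg_mul_le_deriv {g g' : ℝ → ℝ} {K : ℝ} (hg : ∀ τ, HasDerivAt g (g' τ) τ)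
    (hle : ∀ τ ∈ Set.Ioo (0 : ℝ) 1, -(K * g τ) ≤ g' τ) : g 0 ≤ exp K * g 1 := by
  have hderiv (τ : ℝ) : HasDerivAt (fun τ => exp (K * τ) * g τ)
      (exp (K * τ) * (K * g τ + g' τ)) τ :=
    (((hasDerivAt_id τ).const_mul K).exp.fun_mul (hg τ)).congr_deriv (by simp only [id]; ring)
  have hmono : MonotoneOn (fun τ => exp (K * τ) * g τ) (Set.Icc 0 1) := by
    refine monotoneOn_of_deriv_nonneg (convex_Icc 0 1)
      (fun τ _ => (hderiv τ).continuousAt.continuousWithinAt)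
      (fun τ _ => (hderiv τ).differentiableAt.differentiableWithinAt) fun τ hτ => ?_
    rw [interior_Icc] at hτ
    rw [(hderiv τ).deriv]
    exact mul_nonneg (exp_pos _).le (by linarith [hle τ hτ])
  simpa using hmono (Set.left_mem_Icc.mpr zero_le_one) (Set.right_mem_Icc.mpr zero_le_one)
    zero_le_one

/-- The exponential rate at which a positive solution of the heat equation can decay along the
curve `τ ↦ (r τ, z τ)` joining `(0, 0)` to `(r, z)` while time runs from `t / 2` to `t`. -/
noncomputable def harnackExponent (t r z : ℝ) : ℝ := 4 + 2 * r ^ 2 / t + 3 * z ^ 2 / t ^ 2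

lemma neg_harnackExponent_mul_le {t u X Z l : ℝ} (ht : 0 < t) (hu : 0 < u)
    (h : X ^ 2 + 2 * t / 3 * Z ^ 2 ≤ 4 * l * u + 32 / t * u ^ 2) (r z : ℝ) :
    -(harnackExponent t r z * u) ≤ -r * X + z * Z + t / 2 * l := by
  have hsquares : 0 ≤ t / 8 * (X - 4 * r * u / t) ^ 2 + t ^ 2 / 12 * (Z + 6 * z * u / t ^ 2) ^ 2 :=
    by positivity
  have hexpand : t / 8 * (X - 4 * r * u / t) ^ 2 + t ^ 2 / 12 * (Z + 6 * z * u / t ^ 2) ^ 2 +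
      t / 8 * (4 * l * u + 32 / t * u ^ 2 - (X ^ 2 + 2 * t / 3 * Z ^ 2)) =
      u * (harnackExponent t r z * u + (-r * X + z * Z + t / 2 * l)) := by
    unfold harnackExponent
    field_simp
    ring
  have hprod : 0 ≤ u * (harnackExponent t r z * u + (-r * X + z * Z + t / 2 * l)) := by
    rw [← hexpand]
    exact add_nonneg hsquares (mul_nonneg (by positivity) (sub_nonneg.mpr h))
  linarith [nonneg_of_mul_nonneg_right hprod hu]

section HeatFlow

variable {s : Finset (ℕ × ℕ)} {c : ℕ × ℕ → ℝ} {t : ℝ}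

lemma hasDerivAt_realEval_heatFlow_cylindrical {r z θ : ℝ → ℝ} {r' z' θ' τ : ℝ}
    (hr : HasDerivAt r r' τ) (hz : HasDerivAt z z' τ) (hθ : HasDerivAt θ θ' τ) :
    HasDerivAt (fun τ => realEval (cylindrical (r τ) (z τ)) (heatFlow s c (θ τ)))
      (-r' * realEval (cylindrical (r τ) (z τ)) (fieldX (heatFlow s c (θ τ))) +
        z' * realEval (cylindrical (r τ) (z τ)) (fieldZ (heatFlow s c (θ τ))) +
        θ' * realEval (cylindrical (r τ) (z τ)) (subLaplacian (heatFlow s c (θ τ)))) τ := by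
  have hone (p : ℂ × ℂ) (t : ℝ) := realEval_map_heatFlow (s := s) (c := c) 1 p t
  have hX := realEval_map_heatFlow (s := s) (c := c) fieldX.toLinearMap
    (cylindrical (r τ) (z τ)) (θ τ)
  have hZ := realEval_map_heatFlow (s := s) (c := c) fieldZ.toLinearMap
    (cylindrical (r τ) (z τ)) (θ τ)
  simp only [Module.End.one_apply, Derivation.coeFn_coe] at hone hX hZ
  simp only [hone, hX, hZ, realEval_map_heatFlow, Finset.mul_sum, ← Finset.sum_add_distrib]
  refine HasDerivAt.fun_sum fun i _ => ?_
  refine (((hθ.const_mul (-decayRate i.1 i.2)).exp.const_mul (c i)).fun_mul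
    (hasDerivAt_realEval_cylindrical hr hz i.1 i.2)).congr_deriv ?_
  rw [subLaplacian_spherical, map_smul, smul_eq_mul]
  ring

lemma cos_mul_realEval_fieldY_heatFlow (r z : ℝ) :
    cos r * realEval (cylindrical r z) (fieldY (heatFlow s c t)) =
      -sin r * realEval (cylindrical r z) (fieldZ (heatFlow s c t)) := by
  have hY := realEval_map_heatFlow (s := s) (c := c) fieldY.toLinearMap (cylindrical r z) t
  have hZ := realEval_map_heatFlow (s := s) (c := c) fieldZ.toLinearMap (cylindrical r z) t
  simp only [Derivation.coeFn_coe] at hY hZ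
  rw [hY, hZ, Finset.mul_sum, Finset.mul_sum]
  refine Finset.sum_congr rfl fun i _ => ?_
  linear_combination c i * exp (-decayRate i.1 i.2 * t) *
    cos_mul_realEval_fieldY_spherical r z i.1 i.2

lemma realEval_fieldY_heatFlow {r : ℝ} (hr : cos r ≠ 0) (z : ℝ) :
    realEval (cylindrical r z) (fieldY (heatFlow s c t)) =
      -tan r * realEval (cylindrical r z) (fieldZ (heatFlow s c t)) := by
  refine mul_left_cancel₀ hr ?_
  rw [cos_mul_realEval_fieldY_heatFlow, ← tan_mul_cos hr]
  ring

lemma gradient_sq_le_heatFlow (hpos : ∀ p ∈ sphere, 0 < realEval p (heatFlow s c 0))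
    (ht : 0 < t) {θ : ℝ} (hθ : t / 2 ≤ θ) {p : ℂ × ℂ} (hp : p ∈ sphere) :
    realEval p (fieldX (heatFlow s c θ)) ^ 2 +
        2 * t / 3 * realEval p (fieldZ (heatFlow s c θ)) ^ 2 ≤
      4 * realEval p (subLaplacian (heatFlow s c θ)) * realEval p (heatFlow s c θ) +
        32 / t * realEval p (heatFlow s c θ) ^ 2 := by
  have hθ₀ : 0 < θ := (half_pos ht).trans_le hθ
  have hliYau := liYau_heatFlow (α := 3) (δ := 0) (by norm_num) (by norm_num) hpos hθ₀ hp
  have hconst : 16 / θ ≤ 32 / t := by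
    rw [div_le_div_iff₀ hθ₀ ht]
    linarith
  have hconst' := mul_le_mul_of_nonneg_right hconst (sq_nonneg (realEval p (heatFlow s c θ)))
  have hcoeff : 2 * t / 3 * realEval p (fieldZ (heatFlow s c θ)) ^ 2 ≤
      4 * θ / 3 * realEval p (fieldZ (heatFlow s c θ)) ^ 2 := by
    gcongr ?_ / 3 * _
    linarith
  have heq : (3 * 3 - 1 : ℝ) ^ 2 / (4 * (3 - 2) * θ) = 16 / θ := by field_simp; norm_num
  rw [heq] at hliYau
  simp only [zero_mul, zero_div, sub_zero, ne_eq, OfNat.ofNat_ne_zero, not_false_eq_true,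
    zero_pow, sub_self, zero_add] at hliYau
  linarith [sq_nonneg (realEval p (fieldY (heatFlow s c θ)))]

theorem harnack_heatFlow (hpos : ∀ p ∈ sphere, 0 < realEval p (heatFlow s c 0)) (ht : 0 < t)
    (r z : ℝ) :
    realEval (cylindrical 0 0) (heatFlow s c (t / 2)) ≤
      exp (harnackExponent t r z) * realEval (cylindrical r z) (heatFlow s c t) := by
  have hlinear (a τ : ℝ) : HasDerivAt (fun τ => a * τ) a τ := by
    simpa using (hasDerivAt_id τ).const_mul a
  have hderiv (τ : ℝ) := hasDerivAt_realEval_heatFlow_cylindrical (s := s) (c := c) (hlinear r τ)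
    (hlinear z τ) ((hlinear (t / 2) τ).const_add (t / 2))
  have hgrowth := le_exp_mul_of_neg_mul_le_deriv (K := harnackExponent t r z) hderiv
    fun τ hτ => ?_
  · simpa using hgrowth
  · have hθ : t / 2 ≤ t / 2 + t / 2 * τ :=
      le_add_of_nonneg_right (mul_nonneg (half_pos ht).le hτ.1.le)
    have hp := cylindrical_mem_sphere (r * τ) (z * τ)
    exact neg_harnackExponent_mul_le ht
      (realEval_heatFlow_pos hpos ((half_pos ht).le.trans hθ) hp)
      (gradient_sq_le_heatFlow hpos ht hθ hp) r z

end HeatFlow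

lemma diskPoly_one_one_one (R : Type*) [CommRing R] (a b : ℕ) : diskPoly (1 : R) 1 1 a b = 1 := by
  induction a, b using grid_induction with
  | zero_right a => simp
  | zero_left b => simp
  | succ_succ a b h h₁ h₂ => rw [diskPoly_succ_succ, h, h₁, h₂]; ring

section HeatKernel

variable {t : ℝ}

lemma heatKernel_one_origin_pos (ht : 0 < t) : 0 < heatKernel 1 t (cylindrical 0 0) := by
  have hterm (i : ℕ × ℕ) : 0 < heatKernelTerm 1 t (cylindrical 0 0) i := by
    rw [← re_complexTerm, complexTerm, eval_spherical_cylindrical, cos_zero, diskPoly_one_one_one,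
      weight]
    simp only [Complex.ofReal_zero, Complex.ofReal_one, mul_zero, zero_mul, Complex.exp_zero,
      mul_one, Complex.ofReal_re]
    positivity
  exact (summable_heatKernelTerm .one ht (cylindrical_mem_sphere 0 0)).tsum_pos
    (fun i => (hterm i).le) (0, 0) (hterm _)

theorem heatKernel_one_pos (ht : 0 < t) (r z : ℝ) : 0 < heatKernel 1 t (cylindrical r z) := by
  obtain ⟨A⟩ := nonempty_positiveApproximation
  have hharnack : heatKernel 1 (t / 2) (cylindrical 0 0) ≤
      exp (harnackExponent t r z) * heatKernel 1 t (cylindrical r z) :=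
    le_of_tendsto_of_tendsto' (A.tendsto .one (half_pos ht) (cylindrical_mem_sphere 0 0))
      ((A.tendsto .one ht (cylindrical_mem_sphere r z)).const_mul _)
      fun j => harnack_heatFlow (A.pos j) ht r z
  exact pos_of_mul_pos_right ((heatKernel_one_origin_pos (half_pos ht)).trans_le hharnack)
    (exp_pos _).le

theorem liYau_heatKernel {α δ : ℝ} (hα : 2 < α) (hδ : δ ≤ 8) (ht : 0 < t) {r : ℝ}
    (hr : cos r ≠ 0) (z : ℝ) :
    heatKernel fieldX.toLinearMap t (cylindrical r z) ^ 2 +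
        (-tan r * heatKernel fieldZ.toLinearMap t (cylindrical r z)) ^ 2 +
        4 * t / α * heatKernel fieldZ.toLinearMap t (cylindrical r z) ^ 2 ≤
      ((3 * α - 1) / (α - 1) - δ * t / α) * heatKernel subLaplacian t (cylindrical r z) *
          heatKernel 1 t (cylindrical r z) +
        (δ ^ 2 * t / (4 * α) - δ * ((3 * α - 1) / (α - 1)) / 2 +
          (3 * α - 1) ^ 2 / (4 * (α - 2) * t)) * heatKernel 1 t (cylindrical r z) ^ 2 := by
  obtain ⟨A⟩ := nonempty_positiveApproximation
  have hp := cylindrical_mem_sphere r z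
  have hu := A.tendsto .one ht hp
  have hX := A.tendsto .fieldX ht hp
  have hZ := A.tendsto .fieldZ ht hp
  have hL := A.tendsto .subLaplacian ht hp
  refine le_of_tendsto_of_tendsto'
    (((hX.pow 2).add ((hZ.const_mul (-tan r)).pow 2)).add ((hZ.pow 2).const_mul (4 * t / α)))
    (((hL.const_mul _).mul hu).add ((hu.pow 2).const_mul _)) fun j => ?_
  have hliYau := liYau_heatFlow hα hδ (A.pos j) ht hp
  rwa [realEval_fieldY_heatFlow hr] at hliYau

end HeatKernel

section HeatP

variable {t r : ℝ}

lemma deriv_heatP_radial (ht : 0 < t) (hr : cos r ≠ 0) (z : ℝ) :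
    deriv (fun r => heatP t r z) r = -heatKernel fieldX.toLinearMap t (cylindrical r z) := by
  refine ((hasDerivAt_heatKernel_radial ht r z).congr_of_eventuallyEq ?_).deriv
  filter_upwards [continuous_cos.continuousAt.eventually_ne hr] with r' hr'
  exact heatP_eq_heatKernel ht hr' z

lemma deriv_heatP_angular (ht : 0 < t) (hr : cos r ≠ 0) (z : ℝ) :
    deriv (fun z => heatP t r z) z = heatKernel fieldZ.toLinearMap t (cylindrical r z) := by
  simp only [heatP_eq_heatKernel ht hr]
  exact (hasDerivAt_heatKernel_angular ht r z).deriv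

lemma deriv_heatP_time (ht : 0 < t) (hr : cos r ≠ 0) (z : ℝ) :
    deriv (fun t => heatP t r z) t = heatKernel subLaplacian t (cylindrical r z) := by
  refine ((hasDerivAt_heatKernel_time ht (cylindrical_mem_sphere r z)).congr_of_eventuallyEq
    ?_).deriv
  filter_upwards [lt_mem_nhds ht] with t' ht'
  exact heatP_eq_heatKernel ht' hr z

end HeatP

lemma liYau_of_sharp {α t g ζ l : ℝ} (hα : 2 < α) (ht : 0 < t)
    (h : g + 4 * t / α * ζ ^ 2 ≤ ((3 * α - 1) / (α - 1) - 2 * t / α) * l +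
      (2 ^ 2 * t / (4 * α) - 2 * ((3 * α - 1) / (α - 1)) / 2 +
        (3 * α - 1) ^ 2 / (4 * (α - 2) * t))) :
    g + t / α * ζ ^ 2 ≤ ((3 * α - 1) / (α - 1) - 2 * t / α) * l + t / α -
      (3 * α - 1) / (α - 1) + (3 * α - 1) ^ 2 / ((α - 2) * t) := by
  have hα₀ : 0 < α := by linarith
  have hα₂ : 0 < α - 2 := by linarith
  have hvertical : t / α * ζ ^ 2 ≤ 4 * t / α * ζ ^ 2 := by gcongr; linarith
  have hconst : (3 * α - 1) ^ 2 / (4 * (α - 2) * t) ≤ (3 * α - 1) ^ 2 / ((α - 2) * t) := by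
    gcongr; linarith
  have hlinear : (2 : ℝ) ^ 2 * t / (4 * α) = t / α := by field_simp; norm_num
  linarith

end SubellipticSU2

open SubellipticSU2 in
theorem stmt_17_general {α δ t r : ℝ} (hα : 2 < α) (hδ : δ ≤ 8) (ht : 0 < t) (hr : cos r ≠ 0)
    (z : ℝ) :
    0 < heatP t r z ∧
      (deriv (fun r' => heatP t r' z) r / heatP t r z) ^ 2 +
          tan r ^ 2 * (deriv (fun z' => heatP t r z') z / heatP t r z) ^ 2 +
          4 * t / α * (deriv (fun z' => heatP t r z') z / heatP t r z) ^ 2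
        ≤ ((3 * α - 1) / (α - 1) - δ * t / α) *
              (deriv (fun t' => heatP t' r z) t / heatP t r z) +
            (δ ^ 2 * t / (4 * α) - δ * ((3 * α - 1) / (α - 1)) / 2 +
              (3 * α - 1) ^ 2 / (4 * (α - 2) * t)) := by
  have hpos := heatKernel_one_pos ht r z
  have hliYau := div_le_div_of_nonneg_right (liYau_heatKernel hα hδ ht hr z)
    (sq_nonneg (heatKernel 1 t (cylindrical r z)))
  rw [deriv_heatP_radial ht hr, deriv_heatP_angular ht hr, deriv_heatP_time ht hr,
    heatP_eq_heatKernel ht hr]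
  refine ⟨hpos, le_of_eq_of_le ?_ (hliYau.trans_eq ?_)⟩ <;> field_simp

/-- Li–Yau type inequality for the subelliptic heat kernel on `SU(2)`: for `α > 2`,
`t > 0`, `r ∈ (0,π/2)`, `z ∈ (-π,π)`, one has `p_t(r,z) > 0` and
`Γ(ln p_t) + (t/α)(Z ln p_t)² ≤ ((3α-1)/(α-1) - 2t/α)(∂_t p_t)/p_t + t/α - (3α-1)/(α-1)
  + (3α-1)²/((α-2)t)`. -/
theorem stmt_17 (α : ℝ) (hα : 2 < α) (t : ℝ) (ht : 0 < t)
    (r : ℝ) (hr : r ∈ Set.Ioo 0 (Real.pi / 2)) (z : ℝ)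
    (hz : z ∈ Set.Ioo (-Real.pi) Real.pi) :
    0 < heatP t r z ∧
      (deriv (fun r' => heatP t r' z) r / heatP t r z) ^ 2 +
          Real.tan r ^ 2 * (deriv (fun z' => heatP t r z') z / heatP t r z) ^ 2 +
          (t / α) * (deriv (fun z' => heatP t r z') z / heatP t r z) ^ 2
        ≤ ((3 * α - 1) / (α - 1) - 2 * t / α) *
              (deriv (fun t' => heatP t' r z) t / heatP t r z) +
            t / α - (3 * α - 1) / (α - 1) + (3 * α - 1) ^ 2 / ((α - 2) * t) := by
  have hcos : cos r ≠ 0 := (cos_pos_of_mem_Ioo ⟨by linarith [hr.1, pi_pos], hr.2⟩).ne'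
  exact (stmt_17_general (δ := 2) hα (by norm_num) ht hcos z).imp_right
    (SubellipticSU2.liYau_of_sharp hα ht)
end
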